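/- Let A be a σ-unital non-elementary algebraically simple C*-algebra with QT(A) ≠ ∅, and let a, b ∈ (A⊗K)_+. Assume that either (1) d_τ(a) + ω(a) < d_τ(b) for all τ ∈ \overline{QT(A)}^w, or (2) there exists r > 0 such that d_τ(a) + r < d_τ(b) for all τ ∈ \overline{QT(A)}^w. Then there exist two mutually orthogonal nonzero positive contractions b₀, b₁ ∈ Her(b) such that d_τ(a) < d_τ(b₁) for all τ ∈ \overline{QT(A)}^w. -/

import Mathlib

open scoped ENNReal
open Filter Topology

noncomputable section

namespace Paper

/-! ### Generic definitions in a (non-unital) C*-algebra -/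

variable (R : Type*) [NonUnitalCStarAlgebra R] [PartialOrder R] [StarOrderedRing R]

variable {R} in
/-- The hereditary C*-subalgebra generated by `b`, i.e. `closure (b R b)`. -/
def her (b : R) : Set R := closure {x : R | ∃ y : R, x = b * y * b}

/-- `I` is a (not necessarily closed) two-sided ideal of the subalgebra `B`. -/
def IsIdealIn (B I : Set R) : Prop :=
  I ⊆ B ∧ (0 : R) ∈ I ∧ (∀ x ∈ I, ∀ y ∈ I, x + y ∈ I) ∧ (∀ x ∈ I, -x ∈ I) ∧
    (∀ x ∈ I, ∀ b ∈ B, x * b ∈ I ∧ b * x ∈ I)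

variable {R} in
/-- The Pedersen ideal of the subalgebra `B`: the minimal dense two-sided ideal of `B`,
equivalently the intersection of all dense two-sided ideals of `B`. -/
def pedersenIn (B : Set R) : Set R :=
  ⋂ I ∈ {I : Set R | IsIdealIn R B I ∧ B ⊆ closure I}, I

/-- The Pedersen ideal of `R`. -/
def pedersen : Set R := pedersenIn (Set.univ : Set R)

variable {R} in
/-- Cuntz subequivalence `a ≲ b`. -/
def CuntzLE (a b : R) : Prop :=
  ∃ x : ℕ → R, Tendsto (fun n => ‖a - star (x n) * b * x n‖) atTop (𝓝 0)

variable {R} in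
/-- Cuntz subequivalence relative to a subset `B` (the `xₙ` are taken in `B`). -/
def CuntzLEIn (B : Set R) (a b : R) : Prop :=
  ∃ x : ℕ → R, (∀ n, x n ∈ B) ∧ Tendsto (fun n => ‖a - star (x n) * b * x n‖) atTop (𝓝 0)

variable {R} in
/-- Cuntz equivalence `a ∼ b`. -/
def CuntzEq (a b : R) : Prop := CuntzLE a b ∧ CuntzLE b a

/-- The cut-off function `f_ε`: `0` on `[0, ε/2]`, `1` on `[ε, ∞)`, linear in between. -/
def cutoff (ε : ℝ) : ℝ → ℝ := fun t => min 1 (max 0 (2 * t / ε - 1))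

variable {R} in
/-- `f_ε(a)`, via the (non-unital) continuous functional calculus. -/
def fEps (ε : ℝ) (a : R) : R := cfcₙ (cutoff ε) a

/-- A densely defined 2-quasitrace on `R` (recorded by its values on positive elements;
the value on non-positive elements is normalised to `0`). -/
structure QuasiTrace : Type _ where
  toFun : R → ℝ≥0∞
  zero_of_not_nonneg : ∀ a : R, ¬ (0 ≤ a) → toFun a = 0
  map_zero : toFun 0 = 0
  map_smul : ∀ (r : ℝ) (a : R), 0 < r → 0 ≤ a → toFun (r • a) = ENNReal.ofReal r * toFun a
  map_add_of_commute : ∀ a b : R, 0 ≤ a → 0 ≤ b → a * b = b * a →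
    toFun (a + b) = toFun a + toFun b
  map_star_mul_self : ∀ x : R, toFun (star x * x) = toFun (x * star x)
  lowerSemicontinuousOn : LowerSemicontinuousOn toFun {a : R | 0 ≤ a}
  finite_on_pedersen : ∀ a ∈ pedersen R, 0 ≤ a → toFun a < ∞
  exists_matrix_extension : ∃ σ : Matrix (Fin 2) (Fin 2) R → ℝ≥0∞,
    (∀ a : R, σ (fun i j => if i = 0 ∧ j = 0 then a else 0) = toFun a) ∧
    σ 0 = 0 ∧
    (∀ (r : ℝ) (x : Matrix (Fin 2) (Fin 2) R), 0 < r → (∃ y, x = star y * y) →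
      σ (r • x) = ENNReal.ofReal r * σ x) ∧
    (∀ x y : Matrix (Fin 2) (Fin 2) R, (∃ z, x = star z * z) → (∃ z, y = star z * z) →
      x * y = y * x → σ (x + y) = σ x + σ y) ∧
    (∀ x : Matrix (Fin 2) (Fin 2) R, σ (star x * x) = σ (x * star x))

/-- The topology of pointwise convergence on the Pedersen ideal. -/
instance : TopologicalSpace (QuasiTrace R) :=
  TopologicalSpace.induced (fun τ => fun a : pedersen R => τ.toFun a) inferInstance

variable {R}

/-- The zero quasitrace. -/
def QuasiTrace.IsZero (τ : QuasiTrace R) : Prop := ∀ a : R, τ.toFun a = 0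

/-- The dimension function `d_τ(a) = lim_{ε → 0} τ(f_ε(a))`. -/
def dTau (τ : QuasiTrace R) (a : R) : ℝ≥0∞ :=
  ⨆ n : ℕ, τ.toFun (fEps (1 / (n + 1)) a)

/-- `ω(a)` relative to a set `S` of quasitraces:
`lim_n sup {d_τ(a) - τ(f_{1/n}(a)) : τ ∈ S}`. -/
def omegaOn (S : Set (QuasiTrace R)) (a : R) : ℝ≥0∞ :=
  ⨅ n : ℕ, ⨆ τ ∈ S, (dTau τ a - τ.toFun (fEps (1 / (n + 1)) a))

/-- The seminorm `‖x‖_{2,S}`. -/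
def norm2On (S : Set (QuasiTrace R)) (x : R) : ℝ≥0∞ :=
  ⨆ τ ∈ S, (τ.toFun (star x * x)) ^ (1 / 2 : ℝ)

variable (R)

/-- `R` has (Blackadar's) strict comparison. -/
def StrictComparison : Prop :=
  ∀ a b : R, 0 ≤ a → 0 ≤ b →
    (∀ τ : QuasiTrace R, ¬ τ.IsZero → dTau τ a < dTau τ b) → CuntzLE a b

/-- `R` is a simple C*-algebra: it is nonzero and has no nontrivial closed two-sided ideals. -/
def IsSimpleCStar : Prop :=
  (∃ x : R, x ≠ 0) ∧
    ∀ I : TwoSidedIdeal R, IsClosed (I : Set R) → (I : Set R) = {0} ∨ (I : Set R) = Set.univ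

/-- `R` is σ-unital: it contains a strictly positive element `h`
(equivalently, `Her(h) = R`). -/
def SigmaUnital : Prop := ∃ h : R, 0 ≤ h ∧ her h = Set.univ

/-- `R` is elementary: isomorphic to the algebra of compact operators on some Hilbert space. -/
def IsElementary : Prop :=
  ∃ (H : Type) (_ : NormedAddCommGroup H) (_ : InnerProductSpace ℂ H) (_ : CompleteSpace H)
    (φ : R →⋆ₙₐ[ℂ] (H →L[ℂ] H)), Function.Injective φ ∧
      Set.range φ = {T : H →L[ℂ] H | IsCompactOperator (⇑T)}

/-- `R` is purely infinite: `R ≇ ℂ` and `b ≲ a` for all nonzero positive `a, b`. -/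
def PurelyInfinite : Prop :=
  (¬ ∃ φ : R →⋆ₙₐ[ℂ] ℂ, Function.Bijective φ) ∧
    ∀ a b : R, 0 ≤ a → 0 ≤ b → a ≠ 0 → b ≠ 0 → CuntzLE b a

/-- `R` is finite: its minimal unitization contains no non-unitary isometry. -/
def IsFiniteCStar : Prop :=
  ∀ v : Unitization ℂ R, star v * v = 1 → v * star v = 1

/-- `R` has stable rank one: the invertible elements are dense in the minimal unitization. -/
def StableRankOne : Prop := Dense {x : Unitization ℂ R | IsUnit x}

variable {R}

/-- `c` represents `n·[a]` in the Cuntz semigroup: it is the sum of `n` mutually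
orthogonal positive elements, each Cuntz equivalent to `a`. -/
def IsNFoldRep (n : ℕ) (a c : R) : Prop :=
  ∃ f : Fin n → R, (∀ i, 0 ≤ f i) ∧ (∀ i, CuntzEq (f i) a) ∧
    (∀ i j, i ≠ j → f i * f j = 0) ∧ c = ∑ i, f i

/-- `s` represents the supremum of the increasing sequence of Cuntz classes `[y n]`. -/
def IsCuntzLUB (y : ℕ → R) (s : R) : Prop :=
  (∀ n, CuntzLE (y n) s) ∧ ∀ c : R, 0 ≤ c → (∀ n, CuntzLE (y n) c) → CuntzLE s c

/-- `[x] ≪ [y]` in the Cuntz semigroup. -/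
def CuntzWayBelow (x y : R) : Prop :=
  ∀ yseq : ℕ → R, (∀ n, 0 ≤ yseq n) → (∀ n, CuntzLE (yseq n) (yseq (n + 1))) →
    ∀ s : R, 0 ≤ s → IsCuntzLUB yseq s → CuntzLE y s → ∃ n₀, CuntzLE x (yseq n₀)

variable (R)

/-- The Cuntz semigroup of `R` is almost unperforated. -/
def AlmostUnperforated : Prop :=
  ∀ (a b : R) (k : ℕ), 1 ≤ k → 0 ≤ a → 0 ≤ b →
    (∃ c d : R, IsNFoldRep (k + 1) a c ∧ IsNFoldRep k b d ∧ CuntzLE c d) → CuntzLE a b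

/-- The Cuntz semigroup of `R` is almost divisible. -/
def AlmostDivisible : Prop :=
  ∀ x y : R, 0 ≤ x → 0 ≤ y → CuntzWayBelow x y → ∀ n : ℕ, 1 ≤ n →
    ∃ z : R, 0 ≤ z ∧ (∃ c : R, IsNFoldRep n z c ∧ CuntzLE c y) ∧
      (∃ c : R, IsNFoldRep (n + 1) z c ∧ CuntzLE x c)

/-! ### The stabilization `W ≅ A ⊗ K` -/

variable (A W : Type*) [NonUnitalCStarAlgebra A] [PartialOrder A] [StarOrderedRing A]
  [NonUnitalCStarAlgebra W] [PartialOrder W] [StarOrderedRing W]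

/-- A realization of `W` as the stabilization `A ⊗ K`: the maps `emb i j : a ↦ a ⊗ e_{ij}`
are isometric, satisfy the matrix-unit relations, and have dense joint linear span. -/
structure Stabilization : Type _ where
  emb : ℕ → ℕ → (A →ₗ[ℂ] W)
  emb_mul : ∀ (i j k l : ℕ) (a b : A),
    emb i j a * emb k l b = if j = k then emb i l (a * b) else 0
  emb_star : ∀ (i j : ℕ) (a : A), star (emb i j a) = emb j i (star a)
  norm_emb : ∀ (i j : ℕ) (a : A), ‖emb i j a‖ = ‖a‖
  dense_span : Dense (Submodule.span ℂ {w : W | ∃ (i j : ℕ) (a : A), w = emb i j a} : Set W)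

variable {A W}

/-- The set `QT(A)` of quasitraces normalized on `A ⊆ A ⊗ K`. -/
def QTSet (SB : Stabilization A W) : Set (QuasiTrace W) :=
  {τ | (⨆ a : {a : A // 0 ≤ a ∧ ‖a‖ ≤ 1}, τ.toFun (SB.emb 0 0 a)) = 1}

/-- The quasitraces normalized on the hereditary subalgebra `Her(c) ⊆ W`. -/
def QTSetHer (c : W) : Set (QuasiTrace W) :=
  {τ : QuasiTrace W |
    (⨆ a : {a : W // a ∈ her c ∧ 0 ≤ a ∧ ‖a‖ ≤ 1}, τ.toFun a) = 1}

/-- `ω(a) = 0` for `a ∈ W = A ⊗ K`, computed relative to `\overline{QT(Her(e))}^w`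
for any nonzero `e ∈ Ped(A)₊`. -/
def OmegaZero (SB : Stabilization A W) (a : W) : Prop :=
  ∀ e : A, 0 ≤ e → e ≠ 0 → e ∈ pedersen A →
    omegaOn (closure (QTSetHer (SB.emb 0 0 e))) a = 0

/-- `A` has tracial approximate oscillation zero. -/
def TAOZ (SB : Stabilization A W) : Prop :=
  ∀ e : A, 0 ≤ e → e ≠ 0 → e ∈ pedersen A →
    ∀ a : W, 0 ≤ a → a ∈ pedersen W →
      ∃ b : ℕ → W, (∀ n, 0 ≤ b n) ∧ (∀ n, ‖b n‖ ≤ 1) ∧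
        (∀ n, b n ∈ pedersenIn (her a)) ∧
        Tendsto (fun n => omegaOn (closure (QTSetHer (SB.emb 0 0 e))) (b n)) atTop (𝓝 0) ∧
        Tendsto (fun n => norm2On (closure (QTSetHer (SB.emb 0 0 e))) (a - b n)) atTop (𝓝 0)

/-! ### Affine functions on the quasitrace cone and the map `Γ` -/

variable (W) in
/-- `ρ = t·τ + (1-t)·σ` as quasitraces. -/
def IsCombo (t : ℝ) (τ σ ρ : QuasiTrace W) : Prop :=
  ∀ a : W, 0 ≤ a →
    ρ.toFun a = ENNReal.ofReal t * τ.toFun a + ENNReal.ofReal (1 - t) * σ.toFun a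

variable (W) in
/-- `f` is affine on the quasitrace cone. -/
def IsAffineQT (f : QuasiTrace W → ℝ≥0∞) : Prop :=
  ∀ t : ℝ, 0 ≤ t → t ≤ 1 → ∀ τ σ ρ : QuasiTrace W, IsCombo W t τ σ ρ →
    f ρ = ENNReal.ofReal t * f τ + ENNReal.ofReal (1 - t) * f σ

variable (W) in
/-- Membership in `Aff₊(QT̃(A))`. -/
def MemAffPlus (f : QuasiTrace W → ℝ≥0∞) : Prop :=
  (∀ τ, f τ = 0) ∨
    (Continuous f ∧ IsAffineQT W f ∧ (∀ τ, f τ < ∞) ∧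
      (∀ τ : QuasiTrace W, ¬ τ.IsZero → 0 < f τ) ∧
      (∀ τ : QuasiTrace W, τ.IsZero → f τ = 0))

variable (W) in
/-- Membership in `LAff₊(QT̃(A))`. -/
def MemLAffPlus (f : QuasiTrace W → ℝ≥0∞) : Prop :=
  ∃ g : ℕ → QuasiTrace W → ℝ≥0∞, (∀ n, MemAffPlus W (g n)) ∧
    (∀ n τ, g n τ ≤ g (n + 1) τ) ∧ ∀ τ, f τ = ⨆ n, g n τ

variable (W) in
/-- The canonical map `Γ : Cu(A) → LAff₊(QT̃(A))`, `Γ([a])(τ) = d_τ(a)`, is surjective. -/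
def GammaSurjective : Prop :=
  ∀ f : QuasiTrace W → ℝ≥0∞, MemLAffPlus W f →
    ∃ a : W, 0 ≤ a ∧ ∀ τ : QuasiTrace W, dTau τ a = f τ

/-!
A uniform gap `r` between `d_τ(a)` and `d_τ(b)` leaves room to cut a small piece out of `b`. Since
`A` is simple and not elementary, no hereditary subalgebra of `A` has a minimal projection (the left
ideal of such a projection would be a Hilbert space on which `A` acts as the compact operators).
So every nonzero `c ≥ 0` has two orthogonal nonzero elements under it, hence `Her(c)` contains some
`x ≠ 0` with `x² = 0`, and then `2 d_τ(x* x) ≤ d_τ(c)`. Iterating gives a nonzero `c ∈ Her(b)₊` with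
`d_τ(c) ≤ r` uniformly in `τ`. Subadditivity of `d_τ` then yields
`d_τ(b) ≤ d_τ((1 - f_{ε/2}(c)) b (1 - f_{ε/2}(c))) + r`, and the compressed element is orthogonal
to `f_ε(c)`.

In case (1) with `ω(a) = 0`, the functions `τ ↦ τ(f_ε(a))` converge uniformly to `τ ↦ d_τ(a)`, so
the pointwise gap persists on a neighbourhood of each `τ`. Compactness of the closure of `QT(A)`
makes it uniform. Compactness itself rests on uniform bounds on the Pedersen ideal: an ultrafilter
of quasitraces converges pointwise there, and the lower semicontinuous regularization of the limit
is again a quasitrace. That quasitraces are monotone and `d_τ` subadditive is proved by hand, the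
latter from the isometries that embed the `2 × 2` matrices over `A ⊗ K` into `A ⊗ K`.
-/

/-! ### The cut-off functions and the approximate unit `f_ε(b)` -/

section Cutoff

variable {ε : ℝ}

theorem cutoff_zero (ε : ℝ) : cutoff ε 0 = 0 := by simp [cutoff]

@[fun_prop]
theorem continuous_cutoff (ε : ℝ) : Continuous (cutoff ε) := by
  unfold cutoff
  fun_prop

theorem cutoff_nonneg (ε t : ℝ) : 0 ≤ cutoff ε t := by simp [cutoff]

theorem cutoff_le_one (ε t : ℝ) : cutoff ε t ≤ 1 := by simp [cutoff]

theorem cutoff_eq_zero {t : ℝ} (hε : 0 < ε) (h : t ≤ ε / 2) : cutoff ε t = 0 := by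
  have : 2 * t / ε - 1 ≤ 0 := by
    rw [sub_nonpos, div_le_one hε]; linarith
  simp [cutoff, max_eq_left this]

theorem cutoff_eq_one {t : ℝ} (hε : 0 < ε) (h : ε ≤ t) : cutoff ε t = 1 := by
  have : 1 ≤ 2 * t / ε - 1 := by
    rw [le_sub_iff_add_le, le_div_iff₀ hε]; linarith
  simp [cutoff, this]

theorem cutoff_antitone {δ t : ℝ} (hδ : 0 < δ) (h : δ ≤ ε) (ht : 0 ≤ t) :
    cutoff ε t ≤ cutoff δ t := by
  unfold cutoff
  gcongr

theorem cutoff_mul_cutoff {δ : ℝ} (hδ : 0 < δ) (h : δ ≤ ε / 2) (t : ℝ) :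
    cutoff δ t * cutoff ε t = cutoff ε t := by
  rcases le_total t (ε / 2) with ht | ht
  · rw [cutoff_eq_zero (by linarith) ht, mul_zero]
  · rw [cutoff_eq_one hδ (h.trans ht), one_mul]

theorem one_div_add_one_pos (n : ℕ) : 0 < 1 / ((n : ℝ) + 1) := by positivity

theorem exists_continuous_mul_self_eq {f : ℝ → ℝ} {δ : ℝ} (hδ : 0 < δ) (hf : Continuous f)
    (hfδ : ∀ t ≤ δ, f t = 0) :
    ∃ g : ℝ → ℝ, Continuous g ∧ g 0 = 0 ∧ (∀ t, 0 ≤ f t → 0 ≤ g t) ∧ ∀ t, g t * t = f t := by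
  have hpos : ∀ t : ℝ, 0 < max t δ := fun t => lt_max_of_lt_right hδ
  refine ⟨fun t => f t / max t δ, hf.div (by fun_prop) fun t => (hpos t).ne', by simp [hfδ 0 hδ.le],
    fun t ht => div_nonneg ht (hpos t).le, fun t => ?_⟩
  rcases le_total t δ with h | h
  · simp [hfδ t h]
  · simp only [max_eq_left h, div_mul_cancel₀ _ (hδ.trans_le h).ne']

end Cutoff

section FEps

variable {B : Type*} [NonUnitalCStarAlgebra B] {ε : ℝ} {b x : B}

theorem isSelfAdjoint_fEps (ε : ℝ) (a : B) : IsSelfAdjoint (fEps ε a) := .cfcₙ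

theorem norm_fEps_le (ε : ℝ) (a : B) : ‖fEps ε a‖ ≤ 1 :=
  norm_cfcₙ_le fun t _ => by
    rw [Real.norm_of_nonneg (cutoff_nonneg ε t)]; exact cutoff_le_one ε t

theorem fEps_mul_fEps {δ : ℝ} (hδ : 0 < δ) (h : δ ≤ ε / 2) (a : B) :
    fEps δ a * fEps ε a = fEps ε a := by
  unfold fEps
  rw [← cfcₙ_mul _ _ a (by fun_prop) (cutoff_zero _) (by fun_prop) (cutoff_zero _)]
  exact cfcₙ_congr fun t _ => cutoff_mul_cutoff hδ h t

theorem fEps_mul_fEps_of_half_le {δ : ℝ} (hδ : 0 < δ) (h : δ ≤ ε / 2) (a : B) :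
    fEps ε a * fEps δ a = fEps ε a :=
  (cfcₙ_commute_cfcₙ _ _ a).eq.trans (fEps_mul_fEps hδ h a)

theorem cfcₙ_eq_cfcₙ_mul_self {f g : ℝ → ℝ} (hg : Continuous g) (hg0 : g 0 = 0)
    (h : ∀ t, g t * t = f t) (hb : IsSelfAdjoint b) : cfcₙ f b = cfcₙ g b * b := by
  nth_rewrite 3 [← cfcₙ_id' ℝ b]
  rw [← cfcₙ_mul g (fun t => t) b hg.continuousOn hg0 (by fun_prop) rfl]
  exact cfcₙ_congr fun t _ => (h t).symm

theorem exists_fEps_eq_mul (hε : 0 < ε) (hb : IsSelfAdjoint b) :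
    ∃ h : B, fEps ε b = b * h ∧ fEps ε b = h * b := by
  obtain ⟨g, hg, hg0, -, hgf⟩ := exists_continuous_mul_self_eq (half_pos hε)
    (continuous_cutoff ε) fun t => cutoff_eq_zero hε
  have hmul : fEps ε b = cfcₙ g b * b := cfcₙ_eq_cfcₙ_mul_self hg hg0 hgf hb
  refine ⟨cfcₙ g b, ?_, hmul⟩
  rw [← (isSelfAdjoint_fEps ε b).star_eq, hmul, star_mul, hb.star_eq,
    (IsSelfAdjoint.cfcₙ : IsSelfAdjoint (cfcₙ g b)).star_eq]

end FEps

section ApproximateUnit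

variable {B : Type*} [NonUnitalCStarAlgebra B] [PartialOrder B] [StarOrderedRing B]
  {ε : ℝ} {b x : B}

theorem fEps_nonneg (ε : ℝ) (a : B) : 0 ≤ fEps ε a :=
  cfcₙ_nonneg fun t _ => cutoff_nonneg ε t

theorem fEps_mul_self_le {δ : ℝ} (hδ : 0 < δ) (h : δ ≤ ε / 2) (a : B) :
    fEps ε a * fEps ε a ≤ fEps δ a := by
  unfold fEps
  rw [← cfcₙ_mul _ _ a (by fun_prop) (cutoff_zero _) (by fun_prop) (cutoff_zero _)]
  refine cfcₙ_mono (fun t _ => ?_) (by fun_prop) (by fun_prop) (by simp [cutoff_zero])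
    (cutoff_zero _)
  calc cutoff ε t * cutoff ε t ≤ cutoff ε t :=
        mul_le_of_le_one_left (cutoff_nonneg _ _) (cutoff_le_one _ _)
    _ = cutoff δ t * cutoff ε t := (cutoff_mul_cutoff hδ h t).symm
    _ ≤ cutoff δ t := mul_le_of_le_one_right (cutoff_nonneg _ _) (cutoff_le_one _ _)

theorem norm_fEps_mul_sub_le (hε : 0 < ε) (hb : 0 ≤ b) : ‖fEps ε b * b - b‖ ≤ ε := by
  have : fEps ε b * b - b = cfcₙ (fun t => cutoff ε t * t - t) b := by
    rw [cfcₙ_sub (fun t => cutoff ε t * t) (fun t => t) b (by fun_prop) (by simp) (by fun_prop)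
      (by simp), cfcₙ_mul (cutoff ε) (fun t => t) b (by fun_prop) (cutoff_zero _) (by fun_prop)
      (by simp), cfcₙ_id' ℝ b, fEps]
  rw [this]
  refine norm_cfcₙ_le fun t ht => ?_
  have ht0 := quasispectrum_nonneg_of_nonneg b hb t ht
  rcases le_total ε t with h | h
  · simp [cutoff_eq_one hε h, hε.le]
  · have h1 := cutoff_nonneg ε t
    have h2 := cutoff_le_one ε t
    rw [Real.norm_eq_abs, abs_le]
    constructor <;> nlinarith

theorem tendsto_fEps_mul (hb : 0 ≤ b) :
    Tendsto (fun ε : ℝ => fEps ε b * b) (𝓝[>] 0) (𝓝 b) := by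
  rw [tendsto_iff_norm_sub_tendsto_zero]
  refine squeeze_zero' (.of_forall fun _ => norm_nonneg _) ?_ (tendsto_nhdsWithin_of_tendsto_nhds
    tendsto_id)
  filter_upwards [self_mem_nhdsWithin] with ε hε using norm_fEps_mul_sub_le hε hb

theorem tendsto_mul_fEps (hb : 0 ≤ b) :
    Tendsto (fun ε : ℝ => b * fEps ε b) (𝓝[>] 0) (𝓝 b) := by
  simpa [(isSelfAdjoint_fEps _ b).star_eq, (IsSelfAdjoint.of_nonneg hb).star_eq]
    using (tendsto_fEps_mul hb).star

theorem exists_fEps_ne_zero (hb : 0 ≤ b) (hb0 : b ≠ 0) : ∃ ε > 0, fEps ε b ≠ 0 := by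
  by_contra! h
  refine hb0 (tendsto_nhds_unique (tendsto_fEps_mul hb) (tendsto_const_nhds.congr' ?_))
  filter_upwards [self_mem_nhdsWithin] with ε hε using by rw [h ε hε, zero_mul]

end ApproximateUnit

/-! ### Hereditary subalgebras -/

section Her

variable {B : Type*} [NonUnitalCStarAlgebra B] {b x y : B}

theorem mul_mul_mem_her (b y : B) : b * y * b ∈ her b := subset_closure ⟨y, rfl⟩

theorem isClosed_her (b : B) : IsClosed (her b) := isClosed_closure

theorem her_induction {s : Set B} (hs : IsClosed s) (h : ∀ y, b * y * b ∈ s) : her b ⊆ s :=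
  closure_minimal (by rintro _ ⟨y, rfl⟩; exact h y) hs

theorem add_mem_her (hx : x ∈ her b) (hy : y ∈ her b) : x + y ∈ her b :=
  map_mem_closure₂ continuous_add hx hy <| by
    rintro _ ⟨u, rfl⟩ _ ⟨v, rfl⟩
    exact ⟨u + v, by simp only [mul_add, add_mul]⟩

theorem mul_mul_mem_her_of_mem (w : B) (hx : x ∈ her b) (hy : y ∈ her b) : x * w * y ∈ her b :=
  map_mem_closure₂ (f := fun x y => x * w * y) (by fun_prop) hx hy <| by
    rintro _ ⟨u, rfl⟩ _ ⟨v, rfl⟩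
    exact ⟨u * b * w * b * v, by simp only [mul_assoc]⟩

theorem mul_mem_her (hx : x ∈ her b) (hy : y ∈ her b) : x * y ∈ her b :=
  map_mem_closure₂ continuous_mul hx hy <| by
    rintro _ ⟨u, rfl⟩ _ ⟨v, rfl⟩
    exact ⟨u * b * b * v, by simp only [mul_assoc]⟩

theorem smul_mem_her (r : ℝ) (hx : x ∈ her b) : r • x ∈ her b :=
  map_mem_closure (continuous_const_smul r) hx <| by
    rintro _ ⟨u, rfl⟩
    exact ⟨r • u, by simp only [mul_smul_comm, smul_mul_assoc]⟩

theorem sub_mem_her (hx : x ∈ her b) (hy : y ∈ her b) : x - y ∈ her b := by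
  simpa [sub_eq_add_neg] using add_mem_her hx (smul_mem_her (-1) hy)

theorem zero_mem_her (b : B) : (0 : B) ∈ her b := by simpa using mul_mul_mem_her b 0

theorem star_mem_her (hb : IsSelfAdjoint b) (hx : x ∈ her b) : star x ∈ her b :=
  map_mem_closure continuous_star hx <| by
    rintro _ ⟨u, rfl⟩
    exact ⟨star u, by simp only [star_mul, hb.star_eq, mul_assoc]⟩

/-- `her b` bundled as a star subalgebra, so that the functional calculus can be seen to
preserve it. -/
def herSubalgebra (hb : IsSelfAdjoint b) : NonUnitalStarSubalgebra ℝ B where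
  carrier := her b
  add_mem' := add_mem_her
  zero_mem' := zero_mem_her b
  mul_mem' := mul_mem_her
  smul_mem' r _ := smul_mem_her r
  star_mem' := star_mem_her hb

theorem her_subset_her (hx : x ∈ her b) : her x ⊆ her b :=
  her_induction (isClosed_her b) fun y => mul_mul_mem_her_of_mem y hx hx

theorem mul_eq_zero_of_mem_her {z : B} (hx : x ∈ her b) (h : b * z = 0) : x * z = 0 :=
  her_induction (s := {x | x * z = 0}) (isClosed_eq (by fun_prop) continuous_const)
    (fun y => by simp [mul_assoc, h]) hx

theorem mul_eq_zero_of_mem_her_right {z : B} (hx : x ∈ her b) (h : z * b = 0) : z * x = 0 :=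
  her_induction (s := {x | z * x = 0}) (isClosed_eq (by fun_prop) continuous_const)
    (fun y => by simp [← mul_assoc, h]) hx

theorem fEps_mul_mul_fEps_mem_her {ε : ℝ} (hε : 0 < ε) (hb : IsSelfAdjoint b) (x : B) :
    fEps ε b * x * fEps ε b ∈ her b := by
  obtain ⟨h, h₁, h₂⟩ := exists_fEps_eq_mul hε hb
  have : fEps ε b * x * fEps ε b = b * (h * x * h) * b := by
    nth_rewrite 1 [h₁]
    rw [h₂]
    simp only [mul_assoc]
  exact this ▸ mul_mul_mem_her _ _

theorem tendsto_conj_of_tendsto_mul {ι : Type*} {l : Filter ι} {g : ι → B}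
    (hg : ∀ i, ‖g i‖ ≤ 1) (hl : Tendsto (fun i => g i * x) l (𝓝 x))
    (hr : Tendsto (fun i => x * g i) l (𝓝 x)) :
    Tendsto (fun i => g i * x * g i) l (𝓝 x) := by
  have hdiff : Tendsto (fun i => g i * (x * g i - x)) l (𝓝 0) := by
    rw [tendsto_iff_norm_sub_tendsto_zero] at hr
    exact squeeze_zero_norm (fun i => (norm_mul_le _ _).trans
      (mul_le_of_le_one_left (norm_nonneg _) (hg i))) hr
  simpa [mul_sub, mul_assoc] using hdiff.add hl

end Her

section HerOrder

variable {B : Type*} [NonUnitalCStarAlgebra B] [PartialOrder B] [StarOrderedRing B] {b x y : B}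

theorem mem_her_of_tendsto (hb : 0 ≤ b)
    (hl : Tendsto (fun ε : ℝ => fEps ε b * x) (𝓝[>] 0) (𝓝 x))
    (hr : Tendsto (fun ε : ℝ => x * fEps ε b) (𝓝[>] 0) (𝓝 x)) : x ∈ her b := by
  refine (isClosed_her b).mem_of_tendsto
    (tendsto_conj_of_tendsto_mul (fun _ => norm_fEps_le _ _) hl hr) ?_
  filter_upwards [self_mem_nhdsWithin] with ε hε
    using fEps_mul_mul_fEps_mem_her hε (.of_nonneg hb) x

theorem self_mem_her (hb : 0 ≤ b) : b ∈ her b :=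
  mem_her_of_tendsto hb (tendsto_fEps_mul hb) (tendsto_mul_fEps hb)

theorem cfcₙ_mem_her (hb : 0 ≤ b) (f : ℝ → ℝ) : cfcₙ f b ∈ her b :=
  cfcₙ_mem (𝕜' := ℝ) (s := herSubalgebra (.of_nonneg hb)) (hs := isClosed_her b) f
    (self_mem_her hb)

theorem fEps_mem_her (hb : 0 ≤ b) (ε : ℝ) : fEps ε b ∈ her b := cfcₙ_mem_her hb _

theorem tendsto_fEps_mul_of_mem_her (hb : 0 ≤ b) (hx : x ∈ her b) :
    Tendsto (fun ε : ℝ => fEps ε b * x) (𝓝[>] 0) (𝓝 x) := by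
  rw [Metric.tendsto_nhds]
  intro η hη
  obtain ⟨_, ⟨y, rfl⟩, hy⟩ := Metric.mem_closure_iff.1 hx (η / 3) (by positivity)
  have hz : Tendsto (fun ε : ℝ => fEps ε b * (b * y * b)) (𝓝[>] 0) (𝓝 (b * y * b)) := by
    simpa [mul_assoc] using (tendsto_fEps_mul hb).mul_const (y * b)
  filter_upwards [Metric.tendsto_nhds.1 hz (η / 3) (by positivity)] with ε hε
  have hcontr : dist (fEps ε b * x) (fEps ε b * (b * y * b)) ≤ dist x (b * y * b) := by
    rw [dist_eq_norm, dist_eq_norm, ← mul_sub]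
    exact (norm_mul_le _ _).trans (mul_le_of_le_one_left (norm_nonneg _) (norm_fEps_le _ _))
  have := dist_triangle4 (fEps ε b * x) (fEps ε b * (b * y * b)) (b * y * b) x
  rw [dist_comm (b * y * b) x] at this
  linarith

theorem tendsto_mul_fEps_of_mem_her (hb : 0 ≤ b) (hx : x ∈ her b) :
    Tendsto (fun ε : ℝ => x * fEps ε b) (𝓝[>] 0) (𝓝 x) := by
  simpa [(isSelfAdjoint_fEps _ b).star_eq]
    using (tendsto_fEps_mul_of_mem_her hb (star_mem_her (.of_nonneg hb) hx)).star

theorem tendsto_conj_fEps_of_mem_her (hb : 0 ≤ b) (hx : x ∈ her b) :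
    Tendsto (fun ε : ℝ => fEps ε b * x * fEps ε b) (𝓝[>] 0) (𝓝 x) :=
  tendsto_conj_of_tendsto_mul (fun _ => norm_fEps_le _ _) (tendsto_fEps_mul_of_mem_her hb hx)
    (tendsto_mul_fEps_of_mem_her hb hx)

theorem exists_isSelfAdjoint_mul_self (hx : 0 ≤ x) : ∃ s : B, IsSelfAdjoint s ∧ s * s = x :=
  ⟨CFC.sqrt x, .of_nonneg (CFC.sqrt_nonneg x), CFC.sqrt_mul_sqrt_self x hx⟩

theorem conj_le_conj {e : B} (he : IsSelfAdjoint e) (h : x ≤ y) : e * x * e ≤ e * y * e := by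
  simpa only [he.star_eq] using star_left_conjugate_le_conjugate h e

theorem conj_le_norm_smul {g : B} (hg : IsSelfAdjoint g) (hy : 0 ≤ y) :
    g * y * g ≤ ‖y‖ • (g * g) := by
  simpa only [hg.star_eq] using
    CStarAlgebra.star_left_conjugate_le_norm_smul (a := g) (b := y) (.of_nonneg hy)

-- The expressions below expand `(1 - g) * x * (1 - g)`, which makes no sense without a unit.
theorem conj_one_sub_nonneg {g : B} (hx : 0 ≤ x) (hg : IsSelfAdjoint g) :
    0 ≤ x - g * x - x * g + g * x * g := by
  obtain ⟨s, hs, rfl⟩ := exists_isSelfAdjoint_mul_self hx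
  have := mul_star_self_nonneg (s - g * s)
  simp only [star_sub, star_mul, hs.star_eq, hg.star_eq] at this
  convert this using 1
  noncomm_ring

theorem conj_one_sub_le {g : B} (h : x ≤ y) (hg : IsSelfAdjoint g) :
    x - g * x - x * g + g * x * g ≤ y - g * y - y * g + g * y * g := by
  rw [← sub_nonneg]
  convert conj_one_sub_nonneg (sub_nonneg.2 h) hg using 1
  noncomm_ring

theorem norm_mul_sub_sq_le {g s : B} (hs : IsSelfAdjoint s) (hg : IsSelfAdjoint g)
    (h : s * s ≤ y) : ‖g * s - s‖ ^ 2 ≤ ‖y - g * y - y * g + g * y * g‖ := by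
  have hexp : (g * s - s) * star (g * s - s)
      = s * s - g * (s * s) - s * s * g + g * (s * s) * g := by
    rw [star_sub, star_mul, hs.star_eq, hg.star_eq]
    noncomm_ring
  have hss : 0 ≤ s * s := by simpa only [hs.star_eq] using star_mul_self_nonneg s
  rw [sq, ← CStarRing.norm_self_mul_star, hexp]
  exact CStarAlgebra.norm_le_norm_of_nonneg_of_le (conj_one_sub_nonneg hss hg)
    (conj_one_sub_le h hg)

theorem mem_her_of_le (hx : 0 ≤ x) (hxy : x ≤ y) : x ∈ her y := by
  have hy := hx.trans hxy
  obtain ⟨s, hs, rfl⟩ := exists_isSelfAdjoint_mul_self hx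
  have hlim : Tendsto (fun ε : ℝ => y - fEps ε y * y - y * fEps ε y + fEps ε y * y * fEps ε y)
      (𝓝[>] 0) (𝓝 0) := by
    simpa using
      (((tendsto_const_nhds (x := y)).sub (tendsto_fEps_mul hy)).sub (tendsto_mul_fEps hy)).add
      (tendsto_conj_fEps_of_mem_her hy (self_mem_her hy))
  have hs_lim : Tendsto (fun ε : ℝ => fEps ε y * s) (𝓝[>] 0) (𝓝 s) := by
    rw [tendsto_iff_norm_sub_tendsto_zero]
    have := squeeze_zero (fun _ => sq_nonneg _)
      (fun ε => norm_mul_sub_sq_le hs (isSelfAdjoint_fEps ε y) hxy) (by simpa using hlim.norm)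
    simpa using this.sqrt
  have hx_lim : Tendsto (fun ε : ℝ => fEps ε y * (s * s)) (𝓝[>] 0) (𝓝 (s * s)) := by
    simpa [mul_assoc] using hs_lim.mul_const s
  refine mem_her_of_tendsto hy hx_lim ?_
  simpa [(isSelfAdjoint_fEps _ y).star_eq, hs.star_eq] using hx_lim.star

end HerOrder

/-! ### Intertwining functional calculi -/

section Intertwine

variable {B : Type*} [NonUnitalCStarAlgebra B]

/-- The pairs `(x, y)` with `z * x = y * z` and `x * star z = star z * y`. -/
def intertwiner (z : B) : NonUnitalStarSubalgebra ℝ (B × B) where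
  carrier := {p | z * p.1 = p.2 * z ∧ p.1 * star z = star z * p.2}
  add_mem' hp hq := ⟨by simp [mul_add, add_mul, hp.1, hq.1], by simp [mul_add, add_mul, hp.2, hq.2]⟩
  zero_mem' := by simp
  mul_mem' {p q} hp hq := ⟨by simp only [Prod.fst_mul, Prod.snd_mul, ← mul_assoc, hp.1]
                              simp only [mul_assoc, hq.1],
                           by simp only [Prod.fst_mul, Prod.snd_mul, mul_assoc, hq.2]
                              simp only [← mul_assoc, hp.2]⟩
  smul_mem' r p hp := ⟨by simp [mul_smul_comm, smul_mul_assoc, hp.1],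
    by simp [mul_smul_comm, smul_mul_assoc, hp.2]⟩
  star_mem' {p} hp := ⟨by simpa using congrArg star hp.2, by simpa using congrArg star hp.1⟩

theorem isClosed_intertwiner (z : B) : IsClosed (intertwiner z : Set (B × B)) :=
  (isClosed_eq (by fun_prop) (by fun_prop)).inter (isClosed_eq (by fun_prop) (by fun_prop))

theorem mul_cfcₙ_eq_cfcₙ_mul {x y z : B} (hx : IsSelfAdjoint x) (hy : IsSelfAdjoint y)
    (h : z * x = y * z) {f : ℝ → ℝ} (hf : Continuous f) : z * cfcₙ f x = cfcₙ f y * z := by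
  have hstar : x * star z = star z * y := by
    simpa only [star_mul, hx.star_eq, hy.star_eq] using congrArg star h
  have hmem : cfcₙ f (x, y) ∈ intertwiner z :=
    cfcₙ_mem (𝕜' := ℝ) (hs := isClosed_intertwiner z) f ⟨h, hstar⟩
  rw [cfcₙ_map_prod (S := ℝ) f _ _ hf.continuousOn
    (by simp [IsSelfAdjoint, Prod.ext_iff, hx.star_eq, hy.star_eq])] at hmem
  exact hmem.1

theorem exists_star_mul_self_eq_cfcₙ (z : B) {f : ℝ → ℝ} {δ : ℝ} (hδ : 0 < δ) (hf : Continuous f)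
    (hf0 : ∀ t, 0 ≤ f t) (hfδ : ∀ t ≤ δ, f t = 0) :
    ∃ x : B, star x * x = cfcₙ f (star z * z) ∧ x * star x = cfcₙ f (z * star z) := by
  obtain ⟨g, hg, hg0, hg_nonneg, hgf⟩ := exists_continuous_mul_self_eq hδ hf hfδ
  set k : ℝ → ℝ := fun t => √(g t) with hk
  have hkc : Continuous k := hg.sqrt
  have hk0 : k 0 = 0 := by simp [hk, hg0]
  have hkk : ∀ t, k t * t * k t = f t := fun t => by
    rw [mul_right_comm, Real.mul_self_sqrt (hg_nonneg t (hf0 t)), hgf]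
  have hcfc : ∀ a : B, IsSelfAdjoint a → cfcₙ k a * a * cfcₙ k a = cfcₙ f a := by
    intro a ha
    rw [← cfcₙ_eq_cfcₙ_mul_self hkc hk0 (fun t => rfl) ha,
      ← cfcₙ_mul (fun t => k t * t) k a (by fun_prop) (by simp) hkc.continuousOn hk0]
    exact cfcₙ_congr fun t _ => hkk t
  have hsa : ∀ a : B, star (cfcₙ k a) = cfcₙ k a := fun a => (IsSelfAdjoint.cfcₙ).star_eq
  have hz : z * cfcₙ k (star z * z) = cfcₙ k (z * star z) * z :=
    mul_cfcₙ_eq_cfcₙ_mul (.star_mul_self z) (.mul_star_self z) (by simp only [mul_assoc]) hkc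
  refine ⟨z * cfcₙ k (star z * z), ?_, ?_⟩
  · rw [star_mul, hsa, ← hcfc _ (.star_mul_self z)]
    simp only [mul_assoc]
  · rw [hz, star_mul, hsa, ← hcfc _ (.mul_star_self z)]
    simp only [mul_assoc]

theorem fEps_add_of_mul_eq_zero {b c : B} {ε : ℝ} (hε : 0 < ε) (hb : IsSelfAdjoint b)
    (hc : IsSelfAdjoint c) (hbc : b * c = 0) : fEps ε (b + c) = fEps ε b + fEps ε c := by
  have hcb : c * b = 0 := (hb.commute_of_mul_eq_zero hc hbc).eq ▸ hbc
  obtain ⟨g, hg, hg0, -, hgf⟩ := exists_continuous_mul_self_eq (half_pos hε)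
    (continuous_cutoff ε) fun t => cutoff_eq_zero hε
  have hgb : cfcₙ g (b + c) * b = cfcₙ g b * b := by
    rw [← mul_cfcₙ_eq_cfcₙ_mul hb (hb.add hc) (by rw [add_mul, hcb, add_zero]) hg,
      mul_cfcₙ_eq_cfcₙ_mul hb hb rfl hg]
  have hgc : cfcₙ g (b + c) * c = cfcₙ g c * c := by
    rw [← mul_cfcₙ_eq_cfcₙ_mul hc (hb.add hc) (by rw [add_mul, hbc, zero_add]) hg,
      mul_cfcₙ_eq_cfcₙ_mul hc hc rfl hg]
  unfold fEps
  rw [cfcₙ_eq_cfcₙ_mul_self hg hg0 hgf (hb.add hc), cfcₙ_eq_cfcₙ_mul_self hg hg0 hgf hb,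
    cfcₙ_eq_cfcₙ_mul_self hg hg0 hgf hc, mul_add, hgb, hgc]

end Intertwine

/-! ### The Pedersen ideal -/

section Pedersen

variable {B : Type*} [NonUnitalCStarAlgebra B] {x : B}

theorem mem_pedersen_iff :
    x ∈ pedersen B ↔ ∀ I : Set B, IsIdealIn B Set.univ I → Dense I → x ∈ I := by
  simp [pedersen, pedersenIn, dense_iff_closure_eq, Set.univ_subset_iff]

theorem mul_mem_pedersen (hx : x ∈ pedersen B) (y : B) : x * y ∈ pedersen B :=
  mem_pedersen_iff.2 fun I hI hd =>
    (hI.2.2.2.2 x (mem_pedersen_iff.1 hx I hI hd) y trivial).1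

-- If `y ∈ I` is close to `g`, then `1 - (g - y)` is invertible and sends `f` to `y * f ∈ I`.
theorem mem_pedersen_of_mul_eq {g f : B} (h : g * f = f) : f ∈ pedersen B := by
  refine mem_pedersen_iff.2 ?_
  rintro I ⟨-, -, hadd, -, hmul⟩ hd
  obtain ⟨y, hyI, hy⟩ := Metric.mem_closure_iff.1 (hd g) 1 one_pos
  have hunit : IsUnit (1 - ((g - y : B) : Unitization ℂ B)) :=
    isUnit_one_sub_of_norm_lt_one (by rwa [Unitization.norm_inr, ← dist_eq_norm])
  obtain ⟨u, hu⟩ := hunit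
  have huf : (u : Unitization ℂ B) * (f : Unitization ℂ B) = ((y * f : B) : Unitization ℂ B) := by
    rw [hu, sub_mul, one_mul, ← Unitization.inr_mul, sub_mul, h, ← Unitization.inr_sub]
    simp
  have hf : (f : Unitization ℂ B) = ↑u⁻¹ * ((y * f : B) : Unitization ℂ B) := by
    rw [← huf, ← mul_assoc, Units.inv_mul, one_mul]
  have hfst : (↑u⁻¹ : Unitization ℂ B).fst = 1 := by
    have hu_fst : (u : Unitization ℂ B).fst = 1 := by rw [hu]; exact sub_zero 1
    have hinv := congrArg (fun w : Unitization ℂ B => w.fst) (Units.inv_mul u)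
    simpa only [Unitization.fst_mul, hu_fst, mul_one, Unitization.fst_one] using hinv
  have hsnd := congrArg (fun w => w.snd) hf
  simp only [Unitization.snd_inr, Unitization.snd_mul, Unitization.fst_inr, hfst, one_smul,
    zero_smul, add_zero] at hsnd
  rw [hsnd]
  exact hadd _ (hmul y hyI f trivial).1 _ (hmul _ (hmul y hyI f trivial).1 _ trivial).2

theorem cfcₙ_mem_pedersen (a : B) {f : ℝ → ℝ} {δ : ℝ} (hδ : 0 < δ)
    (hf : Continuous f) (hfδ : ∀ t ≤ δ, f t = 0) : cfcₙ f a ∈ pedersen B := by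
  refine mem_pedersen_of_mul_eq (g := fEps δ a) ?_
  unfold fEps
  rw [← cfcₙ_mul (cutoff δ) f a (by fun_prop) (cutoff_zero _) hf.continuousOn (hfδ 0 hδ.le)]
  refine cfcₙ_congr fun t _ => ?_
  rcases le_total t δ with h | h
  · simp [hfδ t h]
  · simp [cutoff_eq_one hδ h]

theorem fEps_mem_pedersen (a : B) {ε : ℝ} (hε : 0 < ε) : fEps ε a ∈ pedersen B :=
  cfcₙ_mem_pedersen a (half_pos hε) (continuous_cutoff ε) fun _ => cutoff_eq_zero hε

end Pedersen

/-! ### Quasitraces and dimension functions -/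

section AdditiveOnCommuting

variable {B : Type*} [NonUnitalCStarAlgebra B] [PartialOrder B] [StarOrderedRing B]
  {t : B → ℝ≥0∞} {a b : B}

omit [StarOrderedRing B] in
/-- Additivity on commuting pairs of positive elements, the defining property of a quasitrace
that is used on functional calculi of a single element. -/
def AdditiveOnCommuting (t : B → ℝ≥0∞) : Prop :=
  ∀ a b : B, 0 ≤ a → 0 ≤ b → a * b = b * a → t (a + b) = t a + t b

theorem AdditiveOnCommuting.le (h : AdditiveOnCommuting t) (ha : 0 ≤ a) (hab : a ≤ b)
    (hc : a * b = b * a) : t a ≤ t b := by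
  have := h a (b - a) ha (sub_nonneg.2 hab) (by rw [mul_sub, sub_mul, hc])
  rw [add_sub_cancel] at this
  exact this ▸ le_self_add

theorem AdditiveOnCommuting.cfcₙ_le (h : AdditiveOnCommuting t) (ha : 0 ≤ a) {f g : ℝ → ℝ}
    (hf : Continuous f) (hg : Continuous g) (hf0 : f 0 = 0) (hg0 : g 0 = 0)
    (hf_nonneg : ∀ s, 0 ≤ s → 0 ≤ f s) (hfg : ∀ s, 0 ≤ s → f s ≤ g s) :
    t (cfcₙ f a) ≤ t (cfcₙ g a) :=
  h.le (cfcₙ_nonneg fun x hx => hf_nonneg x (quasispectrum_nonneg_of_nonneg a ha x hx))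
    (cfcₙ_mono (fun x hx => hfg x (quasispectrum_nonneg_of_nonneg a ha x hx))
      hf.continuousOn hg.continuousOn hf0 hg0)
    (cfcₙ_commute_cfcₙ f g a)

theorem AdditiveOnCommuting.cfcₙ_add (h : AdditiveOnCommuting t) (ha : 0 ≤ a) {f g k : ℝ → ℝ}
    (hf : Continuous f) (hg : Continuous g) (hf0 : f 0 = 0) (hg0 : g 0 = 0)
    (hf_nonneg : ∀ s, 0 ≤ s → 0 ≤ f s) (hg_nonneg : ∀ s, 0 ≤ s → 0 ≤ g s)
    (hk : ∀ s, 0 ≤ s → k s = f s + g s) :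
    t (cfcₙ k a) = t (cfcₙ f a) + t (cfcₙ g a) := by
  have hspec : ∀ s ∈ quasispectrum ℝ a, 0 ≤ s := quasispectrum_nonneg_of_nonneg a ha
  rw [← h _ _ (cfcₙ_nonneg fun x hx => hf_nonneg x (hspec x hx))
    (cfcₙ_nonneg fun x hx => hg_nonneg x (hspec x hx)) (cfcₙ_commute_cfcₙ f g a),
    ← _root_.cfcₙ_add f g a hf.continuousOn hf0 hg.continuousOn hg0]
  exact congrArg t (cfcₙ_congr fun x hx => hk x (hspec x hx))

end AdditiveOnCommuting

section DimensionFunction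

variable {B : Type*} [NonUnitalCStarAlgebra B] [PartialOrder B] [StarOrderedRing B]
  (τ : QuasiTrace B) {a b c x y : B} {r : ℝ}

omit [StarOrderedRing B] in
theorem QuasiTrace.additiveOnCommuting : AdditiveOnCommuting τ.toFun := τ.map_add_of_commute

omit [StarOrderedRing B] in
theorem QuasiTrace.map_smul_of_nonneg (hr : 0 ≤ r) (hy : 0 ≤ y) :
    τ.toFun (r • y) = ENNReal.ofReal r * τ.toFun y := by
  rcases hr.eq_or_lt with rfl | h
  · simp [τ.map_zero]
  · exact τ.map_smul r y h hy

omit [StarOrderedRing B] in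
theorem QuasiTrace.le_of_tendsto {ι : Type*} {l : Filter ι} [l.NeBot] {u : ι → B} {C : ℝ≥0∞}
    (hy : 0 ≤ y) (hlim : Tendsto u l (𝓝 y)) (hu : ∀ᶠ i in l, 0 ≤ u i)
    (hC : ∀ᶠ i in l, τ.toFun (u i) ≤ C) : τ.toFun y ≤ C := by
  refine le_of_forall_lt fun c hc => ?_
  have hlim' : Tendsto u l (𝓝[{a : B | 0 ≤ a}] y) := tendsto_nhdsWithin_iff.2 ⟨hlim, hu⟩
  obtain ⟨i, hi, hiC⟩ :=
    ((hlim'.eventually (τ.lowerSemicontinuousOn y hy c hc)).and hC).exists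
  exact hi.trans_le hiC

theorem fEps_mul_mul_fEps_le {ε δ : ℝ} (hδ : 0 < δ) (h : δ ≤ ε / 2) (hy : 0 ≤ y)
    (hy1 : ‖y‖ ≤ 1) : fEps ε a * y * fEps ε a ≤ fEps δ a :=
  calc fEps ε a * y * fEps ε a ≤ ‖y‖ • (fEps ε a * fEps ε a) :=
        conj_le_norm_smul (isSelfAdjoint_fEps ε a) hy
    _ ≤ (1 : ℝ) • (fEps ε a * fEps ε a) :=
        smul_le_smul_of_nonneg_right hy1 (isSelfAdjoint_fEps ε a).mul_self_nonneg
    _ ≤ fEps δ a := by simpa only [one_smul] using fEps_mul_self_le hδ h a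

theorem le_dTau_of_mem_her (ha : 0 ≤ a) (hy0 : 0 ≤ y) (hy : y ∈ her a) (hy1 : ‖y‖ ≤ 1) :
    τ.toFun y ≤ dTau τ a := by
  have hpos : ∀ ε, 0 ≤ fEps ε a * y * fEps ε a := fun ε =>
    (isSelfAdjoint_fEps ε a).conjugate_nonneg hy0
  refine τ.le_of_tendsto hy0 (tendsto_conj_fEps_of_mem_her ha hy) (.of_forall hpos) ?_
  filter_upwards [self_mem_nhdsWithin] with ε hε
  obtain ⟨n, hn⟩ := exists_nat_one_div_lt (half_pos (Set.mem_Ioi.1 hε))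
  have hδ := one_div_add_one_pos n
  refine le_trans (τ.additiveOnCommuting.le (hpos ε) (fEps_mul_mul_fEps_le hδ hn.le hy0 hy1) ?_)
    (le_iSup (fun n : ℕ => τ.toFun (fEps (1 / ((n : ℝ) + 1)) a)) n)
  rw [mul_assoc, fEps_mul_fEps_of_half_le hδ hn.le, ← mul_assoc, ← mul_assoc,
    fEps_mul_fEps hδ hn.le]

theorem le_ofReal_mul_dTau_of_mem_her (ha : 0 ≤ a) (hy0 : 0 ≤ y) (hy : y ∈ her a)
    (hr : ‖y‖ ≤ r) : τ.toFun y ≤ ENNReal.ofReal r * dTau τ a := by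
  rcases eq_or_ne y 0 with rfl | h
  · simp [τ.map_zero]
  have hr0 : 0 < r := (norm_pos_iff.2 h).trans_le hr
  have hscaled : 0 ≤ r⁻¹ • y := smul_nonneg (by positivity) hy0
  rw [← smul_inv_smul₀ hr0.ne' y, τ.map_smul_of_nonneg hr0.le hscaled]
  gcongr
  refine le_dTau_of_mem_her τ ha hscaled (smul_mem_her _ hy) ?_
  rwa [norm_smul, norm_inv, Real.norm_of_nonneg hr0.le, inv_mul_le_one₀ hr0]

theorem fEps_le_dTau (ha : 0 ≤ a) (ε : ℝ) : τ.toFun (fEps ε a) ≤ dTau τ a :=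
  le_dTau_of_mem_her τ ha (fEps_nonneg _ _) (fEps_mem_her ha _) (norm_fEps_le _ _)

theorem dTau_le_of_mem_her (ha : 0 ≤ a) (hx : 0 ≤ x) (h : x ∈ her a) : dTau τ x ≤ dTau τ a :=
  iSup_le fun _ => le_dTau_of_mem_her τ ha (fEps_nonneg _ _)
    (her_subset_her h (fEps_mem_her hx _)) (norm_fEps_le _ _)

theorem dTau_mono (hx : 0 ≤ x) (h : x ≤ a) : dTau τ x ≤ dTau τ a :=
  dTau_le_of_mem_her τ (hx.trans h) hx (mem_her_of_le hx h)

theorem dTau_smul_le (hr : 0 ≤ r) (hx : 0 ≤ x) : dTau τ (r • x) ≤ dTau τ x :=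
  dTau_le_of_mem_her τ hx (smul_nonneg hr hx) (smul_mem_her r (self_mem_her hx))

theorem dTau_smul (hr : 0 < r) (hx : 0 ≤ x) : dTau τ (r • x) = dTau τ x := by
  refine le_antisymm (dTau_smul_le τ hr.le hx) ?_
  simpa only [inv_smul_smul₀ hr.ne'] using
    dTau_smul_le τ (inv_nonneg.2 hr.le) (smul_nonneg hr.le hx)

omit [StarOrderedRing B] in
theorem dTau_star_mul_self (z : B) : dTau τ (star z * z) = dTau τ (z * star z) := by
  refine iSup_congr fun n => ?_
  have hn := one_div_add_one_pos n
  obtain ⟨x, hx, hx'⟩ := exists_star_mul_self_eq_cfcₙ z (half_pos hn)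
    (continuous_cutoff (1 / ((n : ℝ) + 1))) (cutoff_nonneg _) fun _ => cutoff_eq_zero hn
  unfold fEps
  rw [← hx, ← hx', τ.map_star_mul_self]

theorem exists_star_mul_self_eq_conj (w : B) (ha : 0 ≤ a) :
    ∃ v : B, star v * v = star w * a * w ∧ v * star v ≤ ‖w * star w‖ • a := by
  obtain ⟨s, hs, rfl⟩ := exists_isSelfAdjoint_mul_self ha
  refine ⟨s * w, ?_, ?_⟩
  · simp only [star_mul, hs.star_eq, mul_assoc]
  · simpa only [star_mul, hs.star_eq, mul_assoc] using
      conj_le_norm_smul hs (mul_star_self_nonneg w)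

theorem dTau_star_mul_mul_le (w : B) (ha : 0 ≤ a) : dTau τ (star w * a * w) ≤ dTau τ a := by
  obtain ⟨v, hv, hle⟩ := exists_star_mul_self_eq_conj w ha
  rw [← hv, dTau_star_mul_self]
  exact (dTau_mono τ (mul_star_self_nonneg v) hle).trans (dTau_smul_le τ (norm_nonneg _) ha)

theorem monotone_fEps (ha : 0 ≤ a) :
    Monotone fun n : ℕ => τ.toFun (fEps (1 / ((n : ℝ) + 1)) a) := by
  intro m n h
  refine τ.additiveOnCommuting.cfcₙ_le ha (continuous_cutoff _) (continuous_cutoff _)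
    (cutoff_zero _) (cutoff_zero _) (fun s _ => cutoff_nonneg _ s) fun s hs =>
    cutoff_antitone (one_div_add_one_pos n) ?_ hs
  gcongr

theorem dTau_add_of_mul_eq_zero (hb : 0 ≤ b) (hc : 0 ≤ c) (hbc : b * c = 0) :
    dTau τ (b + c) = dTau τ b + dTau τ c := by
  have hcb : c * b = 0 :=
    ((IsSelfAdjoint.of_nonneg hb).commute_of_mul_eq_zero (.of_nonneg hc) hbc).eq ▸ hbc
  have horth : ∀ {b c : B}, 0 ≤ b → 0 ≤ c → b * c = 0 → ∀ ε, fEps ε b * fEps ε c = 0 :=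
    fun hb hc h ε => mul_eq_zero_of_mem_her (fEps_mem_her hb ε)
      (mul_eq_zero_of_mem_her_right (fEps_mem_her hc ε) h)
  unfold dTau
  rw [ENNReal.iSup_add_iSup_of_monotone (monotone_fEps τ hb) (monotone_fEps τ hc)]
  refine iSup_congr fun n => ?_
  rw [fEps_add_of_mul_eq_zero (one_div_add_one_pos n) (.of_nonneg hb) (.of_nonneg hc) hbc]
  exact τ.map_add_of_commute _ _ (fEps_nonneg _ _) (fEps_nonneg _ _)
    ((horth hb hc hbc _).trans (horth hc hb hcb _).symm)

theorem dTau_add_le_of_mem_her (ha : 0 ≤ a) (hb : 0 ≤ b) (hc : 0 ≤ c) (hbc : b * c = 0)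
    (hba : b ∈ her a) (hca : c ∈ her a) : dTau τ b + dTau τ c ≤ dTau τ a := by
  rw [← dTau_add_of_mul_eq_zero τ hb hc hbc]
  exact dTau_le_of_mem_her τ ha (add_nonneg hb hc) (add_mem_her hba hca)

end DimensionFunction

/-! ### Monotonicity of quasitraces -/

section CutDown

variable {B : Type*} [NonUnitalCStarAlgebra B] [PartialOrder B] [StarOrderedRing B]
  {a e x y : B} {s s' : ℝ}

omit [PartialOrder B] [StarOrderedRing B] in
/-- The cut-down `(a - s)₊`. -/
def cutDown (s : ℝ) (a : B) : B := cfcₙ (fun t : ℝ => max (t - s) 0) a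

theorem cutDown_nonneg (s : ℝ) (a : B) : 0 ≤ cutDown s a :=
  cfcₙ_nonneg fun _ _ => le_max_right _ _

theorem max_zero_sub_eq_zero (hs : 0 ≤ s) : max (0 - s) 0 = 0 := by simp [hs]

theorem cutDown_zero (ha : 0 ≤ a) : cutDown 0 a = a := by
  conv_rhs => rw [← cfcₙ_id' ℝ a]
  exact cfcₙ_congr fun t ht => by
    simp [quasispectrum_nonneg_of_nonneg a ha t ht]

theorem cutDown_eq_zero (ha : 0 ≤ a) (h : ‖a‖ ≤ s) : cutDown s a = 0 := by
  unfold cutDown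
  rw [← cfcₙ_const_zero ℝ a]
  refine cfcₙ_congr fun t ht => max_eq_right (sub_nonpos.2
    ((le_abs_self t).trans <| (NonUnitalIsometricContinuousFunctionalCalculus.norm_quasispectrum_le
      a ht).trans h))

theorem norm_sub_cutDown_le (ha : 0 ≤ a) (hs : 0 ≤ s) : ‖a - cutDown s a‖ ≤ s := by
  have : a - cutDown s a = cfcₙ (fun t => t - max (t - s) 0) a := by
    rw [cfcₙ_sub (fun t : ℝ => t) (fun t => max (t - s) 0) a (by fun_prop) rfl (by fun_prop)
      (max_zero_sub_eq_zero hs), cfcₙ_id' ℝ a, cutDown]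
  rw [this]
  refine norm_cfcₙ_le fun t ht => ?_
  have := quasispectrum_nonneg_of_nonneg a ha t ht
  rw [Real.norm_eq_abs, abs_le]
  rcases max_cases (t - s) 0 with h | h <;> constructor <;> linarith

theorem cutDown_le (ha : 0 ≤ a) (hs : 0 ≤ s) : cutDown s a ≤ a := by
  conv_rhs => rw [← cfcₙ_id' ℝ a]
  refine cfcₙ_mono (fun t ht => ?_) (by fun_prop) (by fun_prop) (max_zero_sub_eq_zero hs) rfl
  exact max_le (by linarith) (quasispectrum_nonneg_of_nonneg a ha t ht)

theorem tendsto_cutDown (ha : 0 ≤ a) : Tendsto (fun s : ℝ => cutDown s a) (𝓝[>] 0) (𝓝 a) := by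
  rw [tendsto_iff_norm_sub_tendsto_zero]
  refine squeeze_zero' (.of_forall fun _ => norm_nonneg _) ?_
    (tendsto_nhdsWithin_of_tendsto_nhds tendsto_id)
  filter_upwards [self_mem_nhdsWithin] with s hs
  exact norm_sub_rev a _ ▸ norm_sub_cutDown_le ha (le_of_lt hs)

theorem exists_continuous_max_sub_eq (hs : 0 ≤ s) (h : s < s') :
    ∃ g : ℝ → ℝ, Continuous g ∧ g 0 = 0 ∧ (∀ t, 0 ≤ g t ∧ g t ≤ 1) ∧
      ∀ t, g t * t * g t - s * (g t * g t) = max (t - s') 0 := by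
  have hpos : ∀ t : ℝ, 0 < max (t - s) (s' - s) := fun t =>
    lt_max_of_lt_right (sub_pos.2 h)
  refine ⟨fun t => √(max (t - s') 0 / max (t - s) (s' - s)),
    (Continuous.div (by fun_prop) (by fun_prop) fun t => (hpos t).ne').sqrt,
    by simp [hs.trans h.le], fun t => ⟨Real.sqrt_nonneg _, ?_⟩, fun t => ?_⟩
  · refine Real.sqrt_le_one.2 ((div_le_one (hpos t)).2 (max_le_max ?_ ?_)) <;> linarith
  · have hsq := Real.mul_self_sqrt (div_nonneg (le_max_right (t - s') 0) (hpos t).le)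
    rw [mul_right_comm, hsq, mul_comm s, ← mul_sub]
    rcases le_total t s' with h' | h'
    · simp [max_eq_right (sub_nonpos.2 h')]
    · rw [max_eq_left (sub_le_sub_right h' s), max_eq_left (sub_nonneg.2 h'),
        div_mul_cancel₀ _ (sub_pos.2 (h.trans_le h')).ne']

omit [PartialOrder B] [StarOrderedRing B] in
theorem exists_conj_sub_eq_cutDown (hs : 0 ≤ s) (h : s < s') (hx : IsSelfAdjoint x) :
    ∃ e : B, IsSelfAdjoint e ∧ ‖e‖ ≤ 1 ∧ e * x * e - s • (e * e) = cutDown s' x := by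
  obtain ⟨g, hg, hg0, hg1, hgg⟩ := exists_continuous_max_sub_eq hs h
  refine ⟨cfcₙ g x, .cfcₙ, norm_cfcₙ_le fun t _ => ?_, ?_⟩
  · rw [Real.norm_of_nonneg (hg1 t).1]
    exact (hg1 t).2
  · rw [← cfcₙ_eq_cfcₙ_mul_self hg hg0 (fun t => rfl) hx,
      ← cfcₙ_mul (fun t => g t * t) g x (by fun_prop) (by simp) hg.continuousOn hg0,
      ← cfcₙ_mul g g x hg.continuousOn hg0 hg.continuousOn hg0,
      ← cfcₙ_smul s _ x (by fun_prop) (by simp [hg0]),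
      ← cfcₙ_sub _ _ x (by fun_prop) (by simp) (by fun_prop) (by simp [hg0])]
    exact cfcₙ_congr fun t _ => hgg t

theorem conj_sub_le_conj_cutDown (hs : 0 ≤ s) (he : IsSelfAdjoint e) (hy : 0 ≤ y) :
    e * y * e - s • (e * e) ≤ e * cutDown s y * e := by
  have hconj : e * (y - cutDown s y) * e ≤ s • (e * e) :=
    calc e * (y - cutDown s y) * e ≤ ‖y - cutDown s y‖ • (e * e) :=
          conj_le_norm_smul he (sub_nonneg.2 (cutDown_le hy hs))
      _ ≤ s • (e * e) :=
          smul_le_smul_of_nonneg_right (norm_sub_cutDown_le hy hs) he.mul_self_nonneg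
  rw [mul_sub, sub_mul, sub_le_iff_le_add] at hconj
  rwa [sub_le_iff_le_add, add_comm]

theorem dTau_cutDown_le (τ : QuasiTrace B) (hs : 0 ≤ s) (h : s < s') (hx : 0 ≤ x) (hxy : x ≤ y) :
    dTau τ (cutDown s' x) ≤ dTau τ (cutDown s y) := by
  obtain ⟨e, he, -, hconj⟩ := exists_conj_sub_eq_cutDown hs h (.of_nonneg hx)
  have hle : cutDown s' x ≤ e * cutDown s y * e := hconj ▸
    (sub_le_sub_right (conj_le_conj he hxy) _).trans
      (conj_sub_le_conj_cutDown hs he (hx.trans hxy))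
  refine (dTau_mono τ (cutDown_nonneg _ _) hle).trans ?_
  simpa only [he.star_eq] using dTau_star_mul_mul_le τ e (cutDown_nonneg s y)

end CutDown

section Layer

variable {B : Type*} [NonUnitalCStarAlgebra B] [PartialOrder B] [StarOrderedRing B]
  (τ : QuasiTrace B) {a x y : B} {s δ : ℝ}

omit [PartialOrder B] [StarOrderedRing B] in
/-- The layer `(a - s)₊ - (a - s - δ)₊` of `a` between the heights `s` and `s + δ`; summing over
layers gives a Riemann sum for `τ(a) = ∫₀^∞ d_τ((a - s)₊) ds`. -/
def layer (s δ : ℝ) (a : B) : B := cfcₙ (fun t : ℝ => min (max (t - s) 0) δ) a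

theorem layer_nonneg (s : ℝ) (hδ : 0 ≤ δ) (a : B) : 0 ≤ layer s δ a :=
  cfcₙ_nonneg fun _ _ => le_min (le_max_right _ _) hδ

omit [PartialOrder B] [StarOrderedRing B] in
theorem norm_layer_le (s : ℝ) (hδ : 0 ≤ δ) (a : B) : ‖layer s δ a‖ ≤ δ :=
  norm_cfcₙ_le fun _ _ => by
    rw [Real.norm_of_nonneg (le_min (le_max_right _ _) hδ)]
    exact min_le_right _ _

theorem AdditiveOnCommuting.cutDown_eq_layer_add {t : B → ℝ≥0∞} (ht : AdditiveOnCommuting t)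
    (ha : 0 ≤ a) (hs : 0 ≤ s) (hδ : 0 ≤ δ) :
    t (cutDown s a) = t (layer s δ a) + t (cutDown (s + δ) a) := by
  refine ht.cfcₙ_add ha (by fun_prop) (by fun_prop) (by simp [hs, hδ])
    (max_zero_sub_eq_zero (add_nonneg hs hδ)) (fun t _ => le_min (le_max_right _ _) hδ)
    (fun t _ => le_max_right _ _) fun t _ => ?_
  rcases le_total (t - s) δ with h | h
  · rw [max_eq_right (show t - (s + δ) ≤ 0 by linarith), min_eq_left (max_le h hδ), add_zero]
  · rw [max_eq_left (show 0 ≤ t - (s + δ) by linarith), max_eq_left (hδ.trans h), min_eq_right h]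
    ring

theorem layer_le_mul_dTau (hs : 0 ≤ s) (hδ : 0 ≤ δ) :
    τ.toFun (layer s δ x) ≤ ENNReal.ofReal δ * dTau τ (cutDown s x) := by
  refine le_ofReal_mul_dTau_of_mem_her τ (cutDown_nonneg _ _) (layer_nonneg s hδ x)
    (mem_her_of_le (layer_nonneg s hδ x) ?_) (norm_layer_le s hδ x)
  exact cfcₙ_mono (fun t _ => min_le_left _ _) (by fun_prop) (by fun_prop) (by simp [hs, hδ])
    (max_zero_sub_eq_zero hs)

theorem mul_dTau_le_layer (hs : 0 ≤ s) (hδ : 0 ≤ δ) (hy : 0 ≤ y) :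
    ENNReal.ofReal δ * dTau τ (cutDown (s + δ) y) ≤ τ.toFun (layer s δ y) := by
  have hsδ := max_zero_sub_eq_zero (add_nonneg hs hδ)
  unfold dTau
  rw [ENNReal.mul_iSup]
  refine iSup_le fun n => ?_
  rw [← τ.map_smul_of_nonneg hδ (fEps_nonneg _ _)]
  unfold fEps cutDown
  rw [← cfcₙ_comp' (cutoff (1 / ((n : ℝ) + 1))) (fun t : ℝ => max (t - (s + δ)) 0) y
      (by fun_prop) (cutoff_zero _) (by fun_prop) hsδ (.of_nonneg hy),
    ← cfcₙ_smul δ _ y (by fun_prop) (by rw [hsδ, cutoff_zero])]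
  refine τ.additiveOnCommuting.cfcₙ_le hy (by fun_prop) (by fun_prop)
    (by rw [hsδ, cutoff_zero, smul_zero]) (by simp [hs, hδ])
    (fun t _ => smul_nonneg hδ (cutoff_nonneg _ _)) fun t _ => ?_
  rcases le_total t (s + δ) with h | h
  · rw [max_eq_right (sub_nonpos.2 h), cutoff_zero, smul_zero]
    exact le_min (le_max_right _ _) hδ
  · have hle : δ ≤ t - s := by linarith
    rw [max_eq_left (hδ.trans hle), min_eq_right hle]
    exact mul_le_of_le_one_right hδ (cutoff_le_one _ _)

theorem layer_le_layer (hs : 0 ≤ s) (hδ : 0 < δ) (hx : 0 ≤ x) (hxy : x ≤ y) :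
    τ.toFun (layer (s + 2 * δ) δ x) ≤ τ.toFun (layer s δ y) :=
  calc τ.toFun (layer (s + 2 * δ) δ x)
      ≤ ENNReal.ofReal δ * dTau τ (cutDown (s + 2 * δ) x) :=
        layer_le_mul_dTau τ (by positivity) hδ.le
    _ ≤ ENNReal.ofReal δ * dTau τ (cutDown (s + δ) y) := by
        gcongr
        exact dTau_cutDown_le τ (by positivity) (by linarith) hx hxy
    _ ≤ τ.toFun (layer s δ y) := mul_dTau_le_layer τ hs hδ.le (hx.trans hxy)

theorem cutDown_add_two_mul_le (hs : 0 ≤ s) (hδ : 0 < δ) (hx : 0 ≤ x) (hxy : x ≤ y) :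
    τ.toFun (cutDown (s + 2 * δ) x) ≤ τ.toFun (cutDown s y) := by
  obtain ⟨n, hn⟩ := exists_nat_ge (‖x‖ / δ)
  replace hn : ‖x‖ ≤ s + 2 * δ + n * δ := by
    rw [div_le_iff₀ hδ] at hn
    linarith
  induction n generalizing s with
  | zero =>
    rw [cutDown_eq_zero hx (by simpa using hn), τ.map_zero]
    exact zero_le
  | succ n ih =>
    have hx_next := ih (s := s + δ) (by positivity) (by push_cast at hn; linarith)
    rw [τ.additiveOnCommuting.cutDown_eq_layer_add hx (by positivity) hδ.le,
      τ.additiveOnCommuting.cutDown_eq_layer_add (hx.trans hxy) hs hδ.le, add_right_comm]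
    exact add_le_add (layer_le_layer τ hs hδ hx hxy) hx_next

theorem QuasiTrace.mono (hx : 0 ≤ x) (hxy : x ≤ y) : τ.toFun x ≤ τ.toFun y := by
  have hlim : Tendsto (fun δ : ℝ => 2 * δ) (𝓝[>] 0) (𝓝[>] 0) := by
    refine tendsto_nhdsWithin_iff.2 ⟨tendsto_nhdsWithin_of_tendsto_nhds ?_, ?_⟩
    · simpa using (tendsto_id (α := ℝ) (x := 𝓝 0)).const_mul 2
    · filter_upwards [self_mem_nhdsWithin] with δ hδ using mul_pos two_pos (Set.mem_Ioi.1 hδ)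
  refine τ.le_of_tendsto hx ((tendsto_cutDown hx).comp hlim)
    (.of_forall fun _ => cutDown_nonneg _ _) ?_
  filter_upwards [self_mem_nhdsWithin] with δ hδ
  simpa [cutDown_zero (hx.trans hxy)] using cutDown_add_two_mul_le τ le_rfl hδ hx hxy

end Layer

section MonotoneQuasitrace

variable {B : Type*} [NonUnitalCStarAlgebra B] [PartialOrder B] [StarOrderedRing B]
  {t : B → ℝ≥0∞} {a a' e p : B}

omit [StarOrderedRing B] in
/-- The algebraic properties shared by quasitraces and their pointwise limits: no lower
semicontinuity, finiteness or matrix extension is required. -/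
structure IsMonotoneQuasitrace (t : B → ℝ≥0∞) : Prop where
  map_zero : t 0 = 0
  map_smul : ∀ (r : ℝ) (a : B), 0 < r → 0 ≤ a → t (r • a) = ENNReal.ofReal r * t a
  additiveOnCommuting : AdditiveOnCommuting t
  map_star_mul_self : ∀ x : B, t (star x * x) = t (x * star x)
  mono : ∀ x y : B, 0 ≤ x → x ≤ y → t x ≤ t y

theorem QuasiTrace.isMonotoneQuasitrace (τ : QuasiTrace B) : IsMonotoneQuasitrace τ.toFun :=
  ⟨τ.map_zero, τ.map_smul, τ.map_add_of_commute, τ.map_star_mul_self, fun _ _ => τ.mono⟩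

theorem apply_conj_le_of_mono (hstar : ∀ x, t (star x * x) = t (x * star x))
    (hmono : ∀ x y, 0 ≤ x → x ≤ y → t x ≤ t y) (he : IsSelfAdjoint e) (he1 : ‖e‖ ≤ 1)
    (hp : 0 ≤ p) : t (e * p * e) ≤ t p := by
  obtain ⟨v, hv, hle⟩ := exists_star_mul_self_eq_conj e hp
  rw [he.star_eq] at hv hle
  have hnorm : ‖e * e‖ ≤ 1 := (norm_mul_le e e).trans (mul_le_one₀ he1 (norm_nonneg _) he1)
  rw [← hv, hstar]
  refine hmono _ _ (mul_star_self_nonneg v) (hle.trans ?_)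
  simpa only [one_smul] using smul_le_smul_of_nonneg_right hnorm hp

theorem IsMonotoneQuasitrace.cutDown_le_of_norm_sub_lt (ht : IsMonotoneQuasitrace t) (ha : 0 ≤ a)
    (ha' : 0 ≤ a') {ε : ℝ} (h : ‖a - a'‖ < ε) : t (cutDown ε a) ≤ t a' := by
  obtain ⟨e, he, he1, hconj⟩ :=
    exists_conj_sub_eq_cutDown (norm_nonneg (a - a')) h (.of_nonneg ha)
  have hle : cutDown ε a ≤ e * a' * e := by
    have hnorm := CStarAlgebra.star_left_conjugate_le_norm_smul (a := e) (b := a - a')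
      ((IsSelfAdjoint.of_nonneg ha).sub (.of_nonneg ha'))
    rw [he.star_eq, mul_sub, sub_mul, sub_le_comm] at hnorm
    exact hconj ▸ hnorm
  exact (ht.mono _ _ (cutDown_nonneg _ _) hle).trans
    (apply_conj_le_of_mono ht.map_star_mul_self ht.mono he he1 ha')

end MonotoneQuasitrace

/-! ### The stabilization absorbs its `2 × 2` matrices -/

namespace Stabilization

section Doubling

variable (SB : Stabilization A W) {x y : W}

omit [PartialOrder A] [StarOrderedRing A] [PartialOrder W] [StarOrderedRing W]

/-- Finite matrices over `A` as elements of `W`, with row `i` placed in row `ι i`. -/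
def rowEmb (ι : ℕ → ℕ) : ((ℕ × ℕ) →₀ A) →ₗ[ℂ] W :=
  Finsupp.lsum ℂ fun p : ℕ × ℕ => SB.emb (ι p.1) p.2

theorem rowEmb_single (ι : ℕ → ℕ) (p : ℕ × ℕ) (a : A) :
    SB.rowEmb ι (Finsupp.single p a) = SB.emb (ι p.1) p.2 a := by
  simp [rowEmb]

theorem denseRange_rowEmb_id : DenseRange (SB.rowEmb id) := by
  refine SB.dense_span.mono ?_
  rw [← LinearMap.coe_range, SetLike.coe_subset_coe, Submodule.span_le]
  rintro _ ⟨i, j, a, rfl⟩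
  exact ⟨Finsupp.single (i, j) a, SB.rowEmb_single id (i, j) a⟩

theorem induction {p : W → Prop} (hp : IsClosed {x | p x})
    (add : ∀ x y, p x → p y → p (x + y)) (emb : ∀ i j a, p (SB.emb i j a)) (x : W) : p x := by
  refine SB.denseRange_rowEmb_id.induction_on x hp fun f => ?_
  induction f using Finsupp.induction_linear with
  | zero => simpa using emb 0 0 0
  | add f g hf hg => rw [map_add]; exact add _ _ hf hg
  | single q a => rw [rowEmb_single]; exact emb _ _ _

theorem star_rowEmb_mul_rowEmb {ι κ : ℕ → ℕ} (h : ∀ i j, ι i = κ j ↔ i = j)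
    (f g : (ℕ × ℕ) →₀ A) :
    star (SB.rowEmb ι f) * SB.rowEmb κ g = star (SB.rowEmb id f) * SB.rowEmb id g := by
  induction f using Finsupp.induction_linear with
  | zero => simp
  | add f f' hf hf' => simp only [map_add, star_add, add_mul, hf, hf']
  | single p a =>
    induction g using Finsupp.induction_linear with
    | zero => simp
    | add g g' hg hg' => simp only [map_add, mul_add, hg, hg']
    | single q b => simp only [rowEmb_single, SB.emb_star, SB.emb_mul, h, id_eq]

theorem norm_rowEmb {ι : ℕ → ℕ} (hι : Function.Injective ι) (f : (ℕ × ℕ) →₀ A) :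
    ‖SB.rowEmb ι f‖ = ‖SB.rowEmb id f‖ := by
  have h := congrArg norm (SB.star_rowEmb_mul_rowEmb (fun i j => hι.eq_iff (a := i) (b := j)) f f)
  rw [CStarRing.norm_star_mul_self, CStarRing.norm_star_mul_self] at h
  exact (mul_self_inj (norm_nonneg _) (norm_nonneg _)).1 h

/-- The row `2 i + s`: the maps `rowIndex 0` and `rowIndex 1` split the rows into two copies. -/
def rowIndex (s : Fin 2) (i : ℕ) : ℕ := 2 * i + s

theorem rowIndex_eq_iff (s t : Fin 2) (i j : ℕ) :
    rowIndex s i = rowIndex t j ↔ s = t ∧ i = j := by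
  unfold rowIndex
  rw [Fin.ext_iff]
  omega

theorem injective_rowIndex (s : Fin 2) : Function.Injective (rowIndex s) :=
  fun i j h => ((rowIndex_eq_iff s s i j).1 h).2

/-- Left multiplication by the isometry `V_s` that moves row `i` to row `2 i + s`; the
multiplier `V_s` itself need not belong to `W`. -/
def shiftRows (s : Fin 2) : W →L[ℂ] W := (SB.rowEmb (rowIndex s)).extendOfNorm (SB.rowEmb id)

theorem shiftRows_emb (s : Fin 2) (i j : ℕ) (a : A) :
    SB.shiftRows s (SB.emb i j a) = SB.emb (rowIndex s i) j a := by
  have h : SB.shiftRows s (SB.rowEmb id (Finsupp.single (i, j) a)) =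
      SB.rowEmb (rowIndex s) (Finsupp.single (i, j) a) :=
    LinearMap.extendOfNorm_eq SB.denseRange_rowEmb_id
      ⟨1, fun f => by rw [SB.norm_rowEmb (injective_rowIndex s), one_mul]⟩ _
  simpa only [rowEmb_single, id_eq] using h

theorem shiftRows_mul (s : Fin 2) (x y : W) :
    SB.shiftRows s (x * y) = SB.shiftRows s x * y := by
  refine SB.induction (p := fun y => SB.shiftRows s (x * y) = SB.shiftRows s x * y)
    (isClosed_eq (by fun_prop) (by fun_prop))
    (fun y y' h h' => by simp only [mul_add, map_add, h, h']) (fun k l b => ?_) y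
  refine SB.induction (p := fun x => SB.shiftRows s (x * _) = SB.shiftRows s x * _)
    (isClosed_eq (by fun_prop) (by fun_prop))
    (fun x x' h h' => by simp only [add_mul, map_add, h, h']) (fun i j a => ?_) x
  rw [SB.emb_mul, shiftRows_emb, SB.emb_mul, apply_ite (SB.shiftRows s), shiftRows_emb, map_zero]

theorem star_shiftRows_mul_shiftRows (s t : Fin 2) (x y : W) :
    star (SB.shiftRows s x) * SB.shiftRows t y = if s = t then star x * y else 0 := by
  refine SB.induction
    (p := fun y => star (SB.shiftRows s x) * SB.shiftRows t y = if s = t then star x * y else 0)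
    (isClosed_eq (by fun_prop) (by split_ifs <;> fun_prop))
    (fun y y' h h' => by simp only [map_add, mul_add, h, h']; split_ifs <;> simp)
    (fun k l b => ?_) y
  refine SB.induction
    (p := fun x => star (SB.shiftRows s x) * SB.shiftRows t _ = if s = t then star x * _ else 0)
    (isClosed_eq (by fun_prop) (by split_ifs <;> fun_prop))
    (fun x x' h h' => by simp only [map_add, star_add, add_mul, h, h']; split_ifs <;> simp)
    (fun i j a => ?_) x
  simp only [shiftRows_emb, SB.emb_star, SB.emb_mul, rowIndex_eq_iff, ite_and]

/-- `V_s x V_t^*`, where `V_s` is the isometry of `shiftRows`. -/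
def corner (s t : Fin 2) : W →L[ℂ] W :=
  (SB.shiftRows s).comp ((starL ℂ : W ≃L⋆[ℂ] W).toContinuousLinearMap.comp
    ((SB.shiftRows t).comp (starL ℂ : W ≃L⋆[ℂ] W).toContinuousLinearMap))

theorem corner_apply (s t : Fin 2) (x : W) :
    SB.corner s t x = SB.shiftRows s (star (SB.shiftRows t (star x))) := rfl

theorem star_corner (s t : Fin 2) (x : W) : star (SB.corner s t x) = SB.corner t s (star x) :=
  SB.induction (p := fun x => star (SB.corner s t x) = SB.corner t s (star x))
    (isClosed_eq (by fun_prop) (by fun_prop))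
    (fun x y hx hy => by simp only [map_add, star_add, hx, hy])
    (fun i j a => by simp only [corner_apply, SB.emb_star, shiftRows_emb, star_star]) x

theorem corner_mul_corner (s t u v : Fin 2) (x y : W) :
    SB.corner s t x * SB.corner u v y = if t = u then SB.corner s v (x * y) else 0 := by
  rw [corner_apply, corner_apply, ← shiftRows_mul, star_shiftRows_mul_shiftRows]
  split_ifs
  · rw [star_star, corner_apply, star_mul, SB.shiftRows_mul v, star_mul, star_star]
  · rw [map_zero]

theorem corner_mul_star (s t : Fin 2) (x y : W) :
    SB.corner s t (x * star y) = SB.shiftRows s x * star (SB.shiftRows t y) := by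
  rw [corner_apply, star_mul, star_star, shiftRows_mul, star_mul, star_star, shiftRows_mul]

/-- The embedding `M₂(W) → W`, `X ↦ ∑ V_s X_{st} V_t^*`. -/
def matrixHom : Matrix (Fin 2) (Fin 2) W →⋆ₙₐ[ℂ] W where
  toFun X := ∑ s, ∑ t, SB.corner s t (X s t)
  map_smul' c X := by
    simp only [Matrix.smul_apply, map_smul, Finset.smul_sum, MonoidHom.id_apply]
  map_zero' := by simp only [Matrix.zero_apply, map_zero, Finset.sum_const_zero]
  map_add' X Y := by simp only [Matrix.add_apply, map_add, Finset.sum_add_distrib]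
  map_mul' X Y := by
    simp only [Matrix.mul_apply, Fin.sum_univ_two, map_add, mul_add, add_mul, corner_mul_corner,
      zero_ne_one, one_ne_zero, if_true, if_false, add_zero, zero_add]
    abel
  map_star' X := by
    simp only [Matrix.star_apply, star_sum, star_corner]
    exact Finset.sum_comm

theorem matrixHom_apply (X : Matrix (Fin 2) (Fin 2) W) :
    SB.matrixHom X = ∑ s, ∑ t, SB.corner s t (X s t) := rfl

theorem matrixHom_corner (a : W) :
    SB.matrixHom (Matrix.of fun i j => if i = 0 ∧ j = 0 then a else 0) = SB.corner 0 0 a := by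
  simp [matrixHom_apply, Fin.sum_univ_two]

end Doubling

end Stabilization

omit [PartialOrder A] [StarOrderedRing A] in
theorem star_add_mul_add_le (x y : W) :
    star (x + y) * (x + y) ≤ (2 : ℝ) • (star x * x + star y * y) := by
  rw [← sub_nonneg]
  convert star_mul_self_nonneg (x - y) using 1
  simp only [two_smul, star_add, star_sub, mul_add, add_mul, mul_sub, sub_mul]
  abel

omit [PartialOrder A] [StarOrderedRing A] in
/-- Replacing `x, y` by `V₀ x, V₁ y` changes neither `x^* x` nor `y^* y` but makes `x x^*` and
`y y^*` orthogonal, and `d_τ` is additive on orthogonal elements. -/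
theorem dTau_star_add_mul_add_le (SB : Stabilization A W) (τ : QuasiTrace W) (x y : W) :
    dTau τ (star (x + y) * (x + y)) ≤ dTau τ (star x * x) + dTau τ (star y * y) := by
  set u := SB.shiftRows 0 x
  set v := SB.shiftRows 1 y
  have huu : star u * u = star x * x := by simp [u, SB.star_shiftRows_mul_shiftRows]
  have hvv : star v * v = star y * y := by simp [v, SB.star_shiftRows_mul_shiftRows]
  have huv : star u * v = 0 := by simp [u, v, SB.star_shiftRows_mul_shiftRows]
  have hvu : star v * u = 0 := by simp [u, v, SB.star_shiftRows_mul_shiftRows]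
  have hsum : star (u + v) * (u + v) = star x * x + star y * y := by
    simp only [star_add, mul_add, add_mul, huu, hvv, huv, hvu, add_zero, zero_add]
  have horth : u * star u * (v * star v) = 0 := by
    rw [mul_assoc, ← mul_assoc (star u), huv, zero_mul, mul_zero]
  have hstar : (u + v) * star (u + v) ≤ (2 : ℝ) • (u * star u + v * star v) := by
    simpa only [← star_add, star_star] using star_add_mul_add_le (star u) (star v)
  have hxy : 0 ≤ star x * x + star y * y :=
    add_nonneg (star_mul_self_nonneg _) (star_mul_self_nonneg _)
  have huv' : 0 ≤ u * star u + v * star v :=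
    add_nonneg (mul_star_self_nonneg _) (mul_star_self_nonneg _)
  calc dTau τ (star (x + y) * (x + y))
      ≤ dTau τ ((2 : ℝ) • (star x * x + star y * y)) :=
        dTau_mono τ (star_mul_self_nonneg _) (star_add_mul_add_le x y)
    _ ≤ dTau τ (star x * x + star y * y) := dTau_smul_le τ two_pos.le hxy
    _ = dTau τ ((u + v) * star (u + v)) := by rw [← hsum, dTau_star_mul_self]
    _ ≤ dTau τ ((2 : ℝ) • (u * star u + v * star v)) :=
        dTau_mono τ (mul_star_self_nonneg _) hstar
    _ ≤ dTau τ (u * star u + v * star v) := dTau_smul_le τ two_pos.le huv'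
    _ = dTau τ (u * star u) + dTau τ (v * star v) :=
        dTau_add_of_mul_eq_zero τ (mul_star_self_nonneg _) (mul_star_self_nonneg _) horth
    _ = dTau τ (star x * x) + dTau τ (star y * y) := by
        rw [← dTau_star_mul_self τ u, ← dTau_star_mul_self τ v, huu, hvv]

/-! ### Uniform bounds over the closure of the normalized quasitraces -/

section CornerEmbedding

namespace Stabilization

variable (SB : Stabilization A W) {a : A}

omit [PartialOrder A] [StarOrderedRing A] [PartialOrder W] [StarOrderedRing W]

/-- The inclusion `a ↦ a ⊗ e₁₁` of `A` in `W` as a `*`-homomorphism. -/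
def embHom : A →⋆ₙₐ[ℂ] W where
  toFun := SB.emb 0 0
  map_smul' c x := map_smul (SB.emb 0 0) c x
  map_zero' := map_zero _
  map_add' := map_add _
  map_mul' x y := by rw [SB.emb_mul, if_pos rfl]
  map_star' x := (SB.emb_star 0 0 x).symm

theorem embHom_apply (a : A) : SB.embHom a = SB.emb 0 0 a := rfl

theorem isometry_embHom : Isometry SB.embHom :=
  AddMonoidHomClass.isometry_of_norm SB.embHom (SB.norm_emb 0 0)

theorem embHom_nonneg [PartialOrder A] [StarOrderedRing A] [PartialOrder W] [StarOrderedRing W]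
    (ha : 0 ≤ a) : 0 ≤ SB.embHom a := by
  obtain ⟨s, hs, rfl⟩ := exists_isSelfAdjoint_mul_self ha
  rw [map_mul]
  exact (hs.map SB.embHom).mul_self_nonneg

theorem embHom_fEps (ha : IsSelfAdjoint a) (ε : ℝ) : SB.embHom (fEps ε a) = fEps ε (SB.embHom a) :=
  NonUnitalStarAlgHom.map_cfcₙ (R := ℝ) (S := ℂ) SB.embHom (cutoff ε) a
    (continuous_cutoff ε).continuousOn (cutoff_zero ε) SB.isometry_embHom.continuous ha
    (ha.map SB.embHom)

end Stabilization

end CornerEmbedding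

section PedersenBound

variable (SB : Stabilization A W) {τ : QuasiTrace W} {x : W}

omit [StarOrderedRing W] in
theorem continuous_eval_of_mem_pedersen (hx : x ∈ pedersen W) :
    Continuous fun τ : QuasiTrace W => τ.toFun x :=
  (continuous_apply (⟨x, hx⟩ : pedersen W)).comp
    (continuous_induced_dom (f := fun τ : QuasiTrace W => fun a : pedersen W => τ.toFun a))

omit [StarOrderedRing W] in
theorem isClosed_dTau_le (x : W) (C : ℝ≥0∞) : IsClosed {τ : QuasiTrace W | dTau τ x ≤ C} := by
  simp only [dTau, iSup_le_iff, Set.ofPred_forall]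
  exact isClosed_iInter fun n => isClosed_le
    (continuous_eval_of_mem_pedersen (fEps_mem_pedersen x (one_div_add_one_pos n)))
    continuous_const

omit [StarOrderedRing W] in
theorem dTau_embHom_le_one (hτ : τ ∈ QTSet SB) {a : A} (ha : 0 ≤ a) :
    dTau τ (SB.embHom a) ≤ 1 := by
  refine iSup_le fun n => ?_
  rw [← SB.embHom_fEps (.of_nonneg ha)]
  exact hτ ▸ le_iSup (fun a : {a : A // 0 ≤ a ∧ ‖a‖ ≤ 1} => τ.toFun (SB.emb 0 0 a))
    ⟨fEps (1 / (n + 1)) a, fEps_nonneg _ _, norm_fEps_le _ _⟩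

omit [StarOrderedRing W] in
theorem dTau_star_emb_mul_emb_le_one (hτ : τ ∈ closure (QTSet SB)) (i j : ℕ) (a : A) :
    dTau τ (star (SB.emb i j a) * SB.emb i j a) ≤ 1 := by
  refine closure_minimal (fun τ hτ => ?_) (isClosed_dTau_le _ 1) hτ
  have hrow : star (SB.emb i j a) * SB.emb i j a = star (SB.emb 0 j a) * SB.emb 0 j a := by
    simp only [SB.emb_star, SB.emb_mul, if_true]
  have hcorner : SB.emb 0 j a * star (SB.emb 0 j a) = SB.embHom (a * star a) := by
    simp only [SB.emb_star, SB.emb_mul, if_true, SB.embHom_apply]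
  rw [Set.mem_ofPred_eq, hrow, dTau_star_mul_self, hcorner]
  exact dTau_embHom_le_one SB hτ (mul_star_self_nonneg a)

theorem dTau_star_mul_mul_le_left (τ : QuasiTrace W) (w x : W) :
    dTau τ (star (w * x) * (w * x)) ≤ dTau τ (star x * x) := by
  rw [dTau_star_mul_self τ (w * x), dTau_star_mul_self τ x]
  simpa only [star_mul, star_star, mul_assoc] using
    dTau_star_mul_mul_le τ (star w) (mul_star_self_nonneg x)

omit [PartialOrder A] [StarOrderedRing A] in
theorem isIdealIn_bounded_dTau (SB : Stabilization A W) (S : Set (QuasiTrace W)) :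
    IsIdealIn W Set.univ {x | ∃ M : NNReal, ∀ τ ∈ S, dTau τ (star x * x) ≤ M} := by
  refine ⟨Set.subset_univ _, ⟨0, fun τ _ => ?_⟩, ?_, ?_, ?_⟩
  · simp [dTau, fEps, τ.map_zero]
  · rintro x ⟨M, hM⟩ y ⟨N, hN⟩
    refine ⟨M + N, fun τ hτ => (dTau_star_add_mul_add_le SB τ x y).trans ?_⟩
    rw [ENNReal.coe_add]
    exact add_le_add (hM τ hτ) (hN τ hτ)
  · rintro x ⟨M, hM⟩
    exact ⟨M, by simpa only [star_neg, neg_mul_neg] using hM⟩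
  · rintro x ⟨M, hM⟩ w -
    refine ⟨⟨M, fun τ hτ => le_trans ?_ (hM τ hτ)⟩,
      M, fun τ hτ => (dTau_star_mul_mul_le_left τ w x).trans (hM τ hτ)⟩
    simpa only [star_mul, mul_assoc] using dTau_star_mul_mul_le τ w (star_mul_self_nonneg x)

theorem exists_dTau_star_mul_self_le (hx : x ∈ pedersen W) :
    ∃ M : NNReal, ∀ τ ∈ closure (QTSet SB), dTau τ (star x * x) ≤ M := by
  set I := {x : W | ∃ M : NNReal, ∀ τ ∈ closure (QTSet SB), dTau τ (star x * x) ≤ M}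
  have hI : IsIdealIn W Set.univ I := isIdealIn_bounded_dTau SB _
  have hemb : ∀ i j a, SB.emb i j a ∈ I := fun i j a =>
    ⟨1, fun τ hτ => dTau_star_emb_mul_emb_le_one SB hτ i j a⟩
  refine mem_pedersen_iff.1 hx I hI fun y => ?_
  refine SB.induction (p := (· ∈ closure I)) isClosed_closure (fun x y hx hy => ?_)
    (fun i j a => subset_closure (hemb i j a)) y
  exact map_mem_closure₂ continuous_add hx hy hI.2.2.1

theorem exists_dTau_le (hx : x ∈ pedersen W) (hx0 : 0 ≤ x) :
    ∃ M : NNReal, ∀ τ ∈ closure (QTSet SB), dTau τ x ≤ M := by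
  obtain ⟨M, hM⟩ := exists_dTau_star_mul_self_le SB hx
  have hsa := IsSelfAdjoint.of_nonneg hx0
  have hxx : 0 ≤ star x * x := star_mul_self_nonneg x
  have hmem : x ∈ her (star x * x) := by
    have hsqrt : x = cfcₙ Real.sqrt (star x * x) := by
      rw [← CFC.sqrt_eq_real_sqrt _ hxx, hsa.star_eq, CFC.sqrt_mul_self x hx0]
    have hmem := cfcₙ_mem_her hxx Real.sqrt
    rwa [← hsqrt] at hmem
  exact ⟨M, fun τ hτ => (dTau_le_of_mem_her τ hxx hx0 hmem).trans (hM τ hτ)⟩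

end PedersenBound

/-! ### Lower semicontinuous regularization and compactness -/

section Regularization

variable {B : Type*} [NonUnitalCStarAlgebra B] [PartialOrder B] [StarOrderedRing B]
  {t : B → ℝ≥0∞} {a b c e x y : B} {r : ℝ}

open Classical in
/-- The lower semicontinuous regularization `a ↦ sup_{ε > 0} t((a - ε)₊)`, with the value `0` off
the positive cone that `QuasiTrace.zero_of_not_nonneg` asks for. -/
def lscReg (t : B → ℝ≥0∞) (a : B) : ℝ≥0∞ :=
  if 0 ≤ a then ⨆ (ε : ℝ) (_ : 0 < ε), t (cutDown ε a) else 0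

/-- `t` is bounded, relative to the norm, on the hereditary subalgebra generated by each positive
element of the Pedersen ideal. -/
def BoundedOnPedersen (t : B → ℝ≥0∞) : Prop :=
  ∀ x ∈ pedersen B, 0 ≤ x → ∃ M : NNReal, ∀ y ∈ her x, 0 ≤ y → t y ≤ ENNReal.ofReal ‖y‖ * M

omit [StarOrderedRing B] in
theorem lscReg_of_nonneg (t : B → ℝ≥0∞) (ha : 0 ≤ a) :
    lscReg t a = ⨆ (ε : ℝ) (_ : 0 < ε), t (cutDown ε a) := if_pos ha

omit [StarOrderedRing B] in
theorem lscReg_of_not_nonneg (t : B → ℝ≥0∞) (ha : ¬ 0 ≤ a) : lscReg t a = 0 := if_neg ha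

omit [StarOrderedRing B] in
theorem cutDown_le_lscReg (t : B → ℝ≥0∞) (ha : 0 ≤ a) {ε : ℝ} (hε : 0 < ε) :
    t (cutDown ε a) ≤ lscReg t a := by
  rw [lscReg_of_nonneg t ha]
  exact le_iSup₂ (f := fun (ε : ℝ) (_ : 0 < ε) => t (cutDown ε a)) ε hε

omit [StarOrderedRing B] in
theorem lscReg_le_iff (t : B → ℝ≥0∞) (ha : 0 ≤ a) {C : ℝ≥0∞} :
    lscReg t a ≤ C ↔ ∀ ε : ℝ, 0 < ε → t (cutDown ε a) ≤ C := by
  rw [lscReg_of_nonneg t ha, iSup₂_le_iff]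

omit [PartialOrder B] [StarOrderedRing B] in
theorem cutDown_smul {ε : ℝ} (hr : 0 < r) (hε : 0 ≤ ε) (ha : IsSelfAdjoint a) :
    cutDown (r * ε) (r • a) = r • cutDown ε a := by
  unfold cutDown
  rw [← cfcₙ_comp_smul r (fun t : ℝ => max (t - r * ε) 0) a (by fun_prop)
      (max_zero_sub_eq_zero (by positivity)),
    ← cfcₙ_smul r (fun t : ℝ => max (t - ε) 0) a (by fun_prop) (max_zero_sub_eq_zero hε)]
  refine cfcₙ_congr fun s _ => ?_
  simp only [smul_eq_mul, mul_max_of_nonneg _ _ hr.le, mul_zero, mul_sub]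

namespace IsMonotoneQuasitrace

theorem lscReg_le (ht : IsMonotoneQuasitrace t) (ha : 0 ≤ a) : lscReg t a ≤ t a :=
  (lscReg_le_iff t ha).2 fun _ hε => ht.mono _ _ (cutDown_nonneg _ _) (cutDown_le ha hε.le)

theorem lscReg_zero (ht : IsMonotoneQuasitrace t) : lscReg t 0 = 0 :=
  le_antisymm ((ht.lscReg_le le_rfl).trans ht.map_zero.le) zero_le

theorem lscReg_eq_of_mem_pedersen (ht : IsMonotoneQuasitrace t) (hb : BoundedOnPedersen t)
    (ha : 0 ≤ a) (hp : a ∈ pedersen B) : lscReg t a = t a := by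
  refine le_antisymm (ht.lscReg_le ha) ?_
  obtain ⟨M, hM⟩ := hb a hp ha
  have hle : ∀ ε : ℝ, 0 < ε → t a ≤ ENNReal.ofReal ε * M + lscReg t a := by
    intro ε hε
    have hlayer := ht.additiveOnCommuting.cutDown_eq_layer_add ha le_rfl hε.le
    rw [cutDown_zero ha, zero_add] at hlayer
    rw [hlayer]
    refine add_le_add ((hM _ (cfcₙ_mem_her ha _) (layer_nonneg 0 hε.le a)).trans ?_)
      (cutDown_le_lscReg t ha hε)
    gcongr
    exact norm_layer_le 0 hε.le a
  have hlim : Tendsto (fun ε : ℝ => ENNReal.ofReal ε * M + lscReg t a) (𝓝[>] 0)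
      (𝓝 (ENNReal.ofReal 0 * M + lscReg t a)) :=
    (ENNReal.Tendsto.mul_const (ENNReal.tendsto_ofReal
      (tendsto_nhdsWithin_of_tendsto_nhds tendsto_id)) (.inr ENNReal.coe_ne_top)).add_const _
  simpa using ge_of_tendsto hlim (eventually_mem_nhdsWithin.mono hle)

theorem cutDown_le_lscReg_of_norm_sub_lt (ht : IsMonotoneQuasitrace t) (ha : 0 ≤ a) (hb : 0 ≤ b)
    {ε : ℝ} (h : ‖a - b‖ < ε) : t (cutDown ε a) ≤ lscReg t b := by
  obtain ⟨δ, hδ, hδε⟩ : ∃ δ, 0 < δ ∧ ‖a - b‖ + δ < ε :=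
    ⟨(ε - ‖a - b‖) / 2, by linarith, by linarith⟩
  refine (ht.cutDown_le_of_norm_sub_lt ha (cutDown_nonneg δ b) ?_).trans
    (cutDown_le_lscReg t hb hδ)
  calc ‖a - cutDown δ b‖ ≤ ‖a - b‖ + ‖b - cutDown δ b‖ := norm_sub_le_norm_sub_add_norm_sub _ _ _
    _ ≤ ‖a - b‖ + δ := by gcongr; exact norm_sub_cutDown_le hb hδ.le
    _ < ε := hδε

theorem lscReg_mono (ht : IsMonotoneQuasitrace t) (hx : 0 ≤ x) (hxy : x ≤ y) :
    lscReg t x ≤ lscReg t y := by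
  refine (lscReg_le_iff t hx).2 fun ε hε => ?_
  obtain ⟨e, he, he1, hconj⟩ :=
    exists_conj_sub_eq_cutDown (half_pos hε).le (half_lt_self hε) (.of_nonneg hx)
  have hle : cutDown ε x ≤ e * cutDown (ε / 2) y * e := hconj ▸
    (sub_le_sub_right (conj_le_conj he hxy) _).trans
      (conj_sub_le_conj_cutDown (half_pos hε).le he (hx.trans hxy))
  exact (ht.mono _ _ (cutDown_nonneg _ _) hle).trans
    ((apply_conj_le_of_mono ht.map_star_mul_self ht.mono he he1 (cutDown_nonneg _ _)).trans
      (cutDown_le_lscReg t (hx.trans hxy) (half_pos hε)))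

theorem lscReg_star_mul_self (ht : IsMonotoneQuasitrace t) (z : B) :
    lscReg t (star z * z) = lscReg t (z * star z) := by
  rw [lscReg_of_nonneg t (star_mul_self_nonneg z), lscReg_of_nonneg t (mul_star_self_nonneg z)]
  refine iSup_congr fun ε => iSup_congr fun hε => ?_
  obtain ⟨x, hx, hx'⟩ := exists_star_mul_self_eq_cfcₙ z hε
    (f := fun s => max (s - ε) 0) (by fun_prop) (fun _ => le_max_right _ _)
    fun s hs => max_eq_right (sub_nonpos.2 hs)
  rw [cutDown, cutDown, ← hx, ← hx', ht.map_star_mul_self]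

theorem lscReg_smul_le (ht : IsMonotoneQuasitrace t) (hr : 0 < r) (ha : 0 ≤ a) :
    lscReg t (r • a) ≤ ENNReal.ofReal r * lscReg t a := by
  refine (lscReg_le_iff t (smul_nonneg hr.le ha)).2 fun ε hε => ?_
  have hεr : 0 < ε / r := div_pos hε hr
  rw [← mul_div_cancel₀ ε hr.ne', cutDown_smul hr hεr.le (.of_nonneg ha),
    ht.map_smul r _ hr (cutDown_nonneg _ _)]
  gcongr
  exact cutDown_le_lscReg t ha hεr

theorem lscReg_smul (ht : IsMonotoneQuasitrace t) (hr : 0 < r) (ha : 0 ≤ a) :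
    lscReg t (r • a) = ENNReal.ofReal r * lscReg t a := by
  refine le_antisymm (ht.lscReg_smul_le hr ha) ?_
  rw [lscReg_of_nonneg t ha]
  simp only [ENNReal.mul_iSup]
  refine iSup₂_le fun ε hε => ?_
  rw [← ht.map_smul r _ hr (cutDown_nonneg _ _), ← cutDown_smul hr hε.le (.of_nonneg ha)]
  exact cutDown_le_lscReg t (smul_nonneg hr.le ha) (mul_pos hr hε)

theorem lscReg_conj_le (ht : IsMonotoneQuasitrace t) (he : IsSelfAdjoint e) (he1 : ‖e‖ ≤ 1)
    (hp : 0 ≤ a) : lscReg t (e * a * e) ≤ lscReg t a :=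
  apply_conj_le_of_mono ht.lscReg_star_mul_self (fun _ _ => ht.lscReg_mono) he he1 hp

/-- The conjugates `f_ε(c) x f_ε(c)` lie in the Pedersen ideal, where `t` is its own
regularization. -/
theorem tendsto_lscReg (ht : IsMonotoneQuasitrace t) (hb : BoundedOnPedersen t) (hc : 0 ≤ c)
    (hx : 0 ≤ x) (hxc : x ∈ her c) :
    Tendsto (fun ε : ℝ => t (fEps ε c * x * fEps ε c)) (𝓝[>] 0) (𝓝 (lscReg t x)) := by
  have hlim := tendsto_conj_fEps_of_mem_her hc hxc
  have hnonneg : ∀ ε, 0 ≤ fEps ε c * x * fEps ε c := fun ε =>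
    (isSelfAdjoint_fEps ε c).conjugate_nonneg hx
  refine tendsto_order.2 ⟨fun l hl => ?_, fun u hu => ?_⟩
  · simp only [lscReg_of_nonneg t hx, lt_iSup_iff] at hl
    obtain ⟨δ, hδ, hlδ⟩ := hl
    filter_upwards [(tendsto_iff_norm_sub_tendsto_zero.1 hlim).eventually (gt_mem_nhds hδ)]
      with ε hε
    exact hlδ.trans_le (ht.cutDown_le_of_norm_sub_lt hx (hnonneg ε) (norm_sub_rev x _ ▸ hε))
  · filter_upwards [self_mem_nhdsWithin] with ε hε
    have hp : fEps ε c * x * fEps ε c ∈ pedersen B :=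
      mul_mem_pedersen (mul_mem_pedersen (fEps_mem_pedersen c hε) x) _
    rw [← ht.lscReg_eq_of_mem_pedersen hb (hnonneg ε) hp]
    exact (ht.lscReg_conj_le (isSelfAdjoint_fEps ε c) (norm_fEps_le _ _) hx).trans_lt hu

theorem additiveOnCommuting_lscReg (ht : IsMonotoneQuasitrace t) (hb : BoundedOnPedersen t) :
    AdditiveOnCommuting (lscReg t) := by
  intro x y hx hy hxy
  have hc := add_nonneg hx hy
  have hlim_x := ht.tendsto_lscReg hb hc hx (mem_her_of_le hx (le_add_of_nonneg_right hy))
  have hlim_y := ht.tendsto_lscReg hb hc hy (mem_her_of_le hy (le_add_of_nonneg_left hx))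
  refine tendsto_nhds_unique (ht.tendsto_lscReg hb hc hc (self_mem_her hc))
    ((hlim_x.add hlim_y).congr fun ε => ?_)
  set g := fEps ε (x + y)
  have hg : IsSelfAdjoint g := isSelfAdjoint_fEps ε (x + y)
  have hxy' : Commute x y := hxy
  have hgx : Commute g x := (IsSelfAdjoint.of_nonneg hc).commute_cfcₙ
    ((Commute.refl x).add_left hxy'.symm) _
  have hgy : Commute g y := (IsSelfAdjoint.of_nonneg hc).commute_cfcₙ
    (hxy'.add_left (Commute.refl y)) _
  have hgxg : Commute (g * x * g) (g * y * g) := by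
    have hg_right := ((Commute.refl g).mul_right hgy).mul_right (Commute.refl g)
    have hx_right := (hgx.symm.mul_right hxy').mul_right hgx.symm
    exact (hg_right.mul_left hx_right).mul_left hg_right
  rw [← ht.additiveOnCommuting _ _ (hg.conjugate_nonneg hx) (hg.conjugate_nonneg hy) hgxg.eq,
    mul_add, add_mul]

theorem lowerSemicontinuousOn_lscReg (ht : IsMonotoneQuasitrace t) :
    LowerSemicontinuousOn (lscReg t) {a : B | 0 ≤ a} := by
  intro a ha c hc
  simp only [lscReg_of_nonneg t ha, lt_iSup_iff] at hc
  obtain ⟨ε, hε, hcε⟩ := hc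
  filter_upwards [self_mem_nhdsWithin, nhdsWithin_le_nhds (Metric.ball_mem_nhds a hε)]
    with y hy hya
  exact hcε.trans_le (ht.cutDown_le_lscReg_of_norm_sub_lt ha hy (mem_ball_iff_norm'.1 hya))

end IsMonotoneQuasitrace

end Regularization

section Compactness

variable (SB : Stabilization A W) {t : W → ℝ≥0∞}

omit [PartialOrder A] [StarOrderedRing A] in
/-- `X ↦ t (∑ V_s X_{st} V_t^*)` on the matrices whose `(0, 0)` entry is positive. -/
theorem exists_matrix_extension (SB : Stabilization A W) (h0 : t 0 = 0)
    (h_off : ∀ a, ¬ 0 ≤ a → t a = 0)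
    (h_smul : ∀ (r : ℝ) (a : W), 0 < r → 0 ≤ a → t (r • a) = ENNReal.ofReal r * t a)
    (h_add : AdditiveOnCommuting t) (h_star : ∀ x, t (star x * x) = t (x * star x)) :
    ∃ σ : Matrix (Fin 2) (Fin 2) W → ℝ≥0∞,
      (∀ a : W, σ (fun i j => if i = 0 ∧ j = 0 then a else 0) = t a) ∧
      σ 0 = 0 ∧
      (∀ (r : ℝ) (x : Matrix (Fin 2) (Fin 2) W), 0 < r → (∃ y, x = star y * y) →
        σ (r • x) = ENNReal.ofReal r * σ x) ∧
      (∀ x y : Matrix (Fin 2) (Fin 2) W, (∃ z, x = star z * z) → (∃ z, y = star z * z) →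
        x * y = y * x → σ (x + y) = σ x + σ y) ∧
      (∀ x : Matrix (Fin 2) (Fin 2) W, σ (star x * x) = σ (x * star x)) := by
  classical
  have hentry : ∀ y : Matrix (Fin 2) (Fin 2) W, 0 ≤ (star y * y) 0 0 := fun y => by
    simp only [Matrix.mul_apply, Matrix.star_apply, Fin.sum_univ_two]
    exact add_nonneg (star_mul_self_nonneg _) (star_mul_self_nonneg _)
  have hpos : ∀ y, 0 ≤ SB.matrixHom (star y * y) := fun y => by
    rw [map_mul, map_star]
    exact star_mul_self_nonneg _
  refine ⟨fun X => if 0 ≤ X 0 0 then t (SB.matrixHom X) else 0, fun a => ?_, ?_, ?_, ?_,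
    fun x => ?_⟩
  · simp only [and_self, if_true]
    split_ifs with ha
    · obtain ⟨s, hs, rfl⟩ := exists_isSelfAdjoint_mul_self ha
      refine (congrArg t (SB.matrixHom_corner (s * s))).trans ?_
      have hcorner := SB.corner_mul_star 0 0 s s
      rw [hs.star_eq] at hcorner
      rw [hcorner, ← h_star, SB.star_shiftRows_mul_shiftRows, if_pos rfl, hs.star_eq]
    · exact (h_off a ha).symm
  · simp [h0]
  · rintro r _ hr ⟨y, rfl⟩
    have hmap : SB.matrixHom (r • (star y * y)) = r • SB.matrixHom (star y * y) :=
      map_smul SB.matrixHom (r : ℂ) (star y * y)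
    dsimp only
    rw [if_pos (hentry y), Matrix.smul_apply, if_pos (smul_nonneg hr.le (hentry y)), hmap,
      h_smul r _ hr (hpos y)]
  · rintro _ _ ⟨y, rfl⟩ ⟨z, rfl⟩ h
    dsimp only
    rw [if_pos (hentry y), if_pos (hentry z), Matrix.add_apply,
      if_pos (add_nonneg (hentry y) (hentry z)), map_add]
    exact h_add _ _ (hpos y) (hpos z) (by rw [← map_mul, h, map_mul])
  · have hentry' := hentry (star x)
    rw [star_star] at hentry'
    dsimp only
    rw [if_pos (hentry x), if_pos hentry', map_mul, map_mul, map_star, h_star]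

omit [PartialOrder A] [StarOrderedRing A] in
theorem IsMonotoneQuasitrace.exists_quasiTrace (SB : Stabilization A W)
    (ht : IsMonotoneQuasitrace t) (hb : BoundedOnPedersen t) :
    ∃ τ : QuasiTrace W, ∀ a ∈ pedersen W, 0 ≤ a → τ.toFun a = t a :=
  ⟨{ toFun := lscReg t
     zero_of_not_nonneg := fun _ => lscReg_of_not_nonneg t
     map_zero := ht.lscReg_zero
     map_smul := fun _ _ => ht.lscReg_smul
     map_add_of_commute := ht.additiveOnCommuting_lscReg hb
     map_star_mul_self := ht.lscReg_star_mul_self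
     lowerSemicontinuousOn := ht.lowerSemicontinuousOn_lscReg
     finite_on_pedersen := fun a hp ha => by
       obtain ⟨M, hM⟩ := hb a hp ha
       exact ((ht.lscReg_le ha).trans (hM a (self_mem_her ha) ha)).trans_lt
         (ENNReal.mul_lt_top ENNReal.ofReal_lt_top ENNReal.coe_lt_top)
     exists_matrix_extension := exists_matrix_extension SB ht.lscReg_zero
       (fun _ => lscReg_of_not_nonneg t) (fun _ _ => ht.lscReg_smul)
       (ht.additiveOnCommuting_lscReg hb) ht.lscReg_star_mul_self },
    fun _ hp ha => ht.lscReg_eq_of_mem_pedersen hb ha hp⟩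

omit [StarOrderedRing W] in
theorem IsMonotoneQuasitrace.of_tendsto {ι : Type*} {l : Filter ι} [l.NeBot] {u : ι → W → ℝ≥0∞}
    (hu : ∀ i, IsMonotoneQuasitrace (u i)) (hlim : ∀ x, Tendsto (fun i => u i x) l (𝓝 (t x))) :
    IsMonotoneQuasitrace t where
  map_zero := tendsto_nhds_unique (hlim 0)
    (tendsto_const_nhds.congr fun i => (hu i).map_zero.symm)
  map_smul r a hr ha := tendsto_nhds_unique (hlim _)
    ((ENNReal.Tendsto.const_mul (hlim a) (.inr ENNReal.ofReal_ne_top)).congr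
      fun i => ((hu i).map_smul r a hr ha).symm)
  additiveOnCommuting a b ha hb hab := tendsto_nhds_unique (hlim _)
    (((hlim a).add (hlim b)).congr fun i => ((hu i).additiveOnCommuting a b ha hb hab).symm)
  map_star_mul_self x := tendsto_nhds_unique (hlim _)
    ((hlim _).congr fun i => ((hu i).map_star_mul_self x).symm)
  mono x y hx hxy := le_of_tendsto_of_tendsto' (hlim x) (hlim y) fun i => (hu i).mono x y hx hxy

/-- An ultrafilter converges pointwise to a function that need not be lower semicontinuous; its
regularization is a quasitrace and agrees with it on the Pedersen ideal. -/
theorem isCompact_closure_QTSet : IsCompact (closure (QTSet SB)) := by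
  rw [isCompact_iff_ultrafilter_le_nhds]
  intro U hU
  have hmem : ∀ᶠ τ in (U : Filter (QuasiTrace W)), τ ∈ closure (QTSet SB) := le_principal_iff.1 hU
  set t : W → ℝ≥0∞ := fun x => (U.map fun τ : QuasiTrace W => τ.toFun x).lim
  have hlim : ∀ x, Tendsto (fun τ : QuasiTrace W => τ.toFun x) U (𝓝 (t x)) := fun x =>
    (U.map fun τ : QuasiTrace W => τ.toFun x).le_nhds_lim
  have hbdd : BoundedOnPedersen t := by
    intro x hx hx0
    obtain ⟨M, hM⟩ := exists_dTau_le SB hx hx0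
    refine ⟨M, fun y hy hy0 => le_of_tendsto (hlim y) (hmem.mono fun τ hτ => ?_)⟩
    exact (le_ofReal_mul_dTau_of_mem_her τ hx0 hy0 hy le_rfl).trans (mul_le_mul_right (hM τ hτ) _)
  obtain ⟨τ₀, hτ₀⟩ := (IsMonotoneQuasitrace.of_tendsto (fun τ : QuasiTrace W =>
    τ.isMonotoneQuasitrace) hlim).exists_quasiTrace SB hbdd
  have hle : (U : Filter (QuasiTrace W)) ≤ 𝓝 τ₀ := by
    rw [nhds_induced, ← tendsto_iff_comap, tendsto_pi_nhds]
    rintro ⟨a, ha⟩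
    by_cases h0 : 0 ≤ a
    · exact hτ₀ a ha h0 ▸ hlim a
    · simp only [QuasiTrace.zero_of_not_nonneg _ a h0, tendsto_const_nhds]
  exact ⟨τ₀, isClosed_closure.mem_of_tendsto hle hmem, hle⟩

end Compactness

/-! ### Simple algebras and minimal projections -/

section Simple

variable {B : Type*} [NonUnitalCStarAlgebra B] {c p x y : B}

theorem IsSimpleCStar.mem_of_isIdealIn (hs : IsSimpleCStar B) {I : Set B}
    (hI : IsIdealIn B Set.univ I) (hc : IsClosed I) (hx : x ∈ I) (hx0 : x ≠ 0) (y : B) :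
    y ∈ I := by
  obtain ⟨-, hzero, hadd, hneg, hmul⟩ := hI
  set J : TwoSidedIdeal B := .mk' I hzero (fun hx hy => hadd _ hx _ hy) (fun hx => hneg _ hx)
    (fun hy => (hmul _ hy _ trivial).2) (fun hx => (hmul _ hx _ trivial).1)
  have hJ : (J : Set B) = I := TwoSidedIdeal.coe_mk' ..
  rcases hJ ▸ hs.2 J (hJ.symm ▸ hc) with h | h
  · exact absurd (by simpa [h] using hx) hx0
  · exact h ▸ trivial

theorem IsSimpleCStar.exists_mul_mul_ne_zero (hs : IsSimpleCStar B) (hx : x ≠ 0) (hy : y ≠ 0) :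
    ∃ w, x * w * y ≠ 0 := by
  by_contra! h
  have hI : IsIdealIn B Set.univ {z | ∀ w, x * w * z = 0} := by
    refine ⟨Set.subset_univ _, fun w => mul_zero _, fun a ha b hb w => ?_, fun a ha w => ?_,
      fun a ha b _ => ⟨fun w => ?_, fun w => ?_⟩⟩
    · rw [mul_add, ha w, hb w, add_zero]
    · rw [mul_neg, ha w, neg_zero]
    · rw [← mul_assoc, ha w, zero_mul]
    · rw [← mul_assoc, mul_assoc x, ha]
  have hclosed : IsClosed {z | ∀ w, x * w * z = 0} := by
    simp only [Set.ofPred_forall]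
    exact isClosed_iInter fun w => isClosed_eq (by fun_prop) continuous_const
  have hxx := hs.mem_of_isIdealIn hI hclosed h hy (x * star x) (star x)
  exact hx ((CStarRing.mul_star_self_eq_zero_iff x).1
    ((CStarRing.mul_star_self_eq_zero_iff _).1 (by simpa [mul_assoc] using hxx)))

/-- A nonzero projection `p` with `p B p = ℂ p`. -/
structure IsMinimalProjection (p : B) : Prop where
  isStarProjection : IsStarProjection p
  ne_zero : p ≠ 0
  exists_eq_smul : ∀ z, ∃ μ : ℂ, p * z * p = μ • p

theorem mul_eq_of_mem_her (hp : p * p = p) (hx : x ∈ her p) : p * x = x ∧ x * p = x :=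
  her_induction (s := {x | p * x = x ∧ x * p = x})
    ((isClosed_eq (by fun_prop) continuous_id).inter (isClosed_eq (by fun_prop) continuous_id))
    (fun y => ⟨by rw [← mul_assoc, ← mul_assoc, hp], by rw [mul_assoc, hp]⟩) hx

variable [PartialOrder B] [StarOrderedRing B]

/-- `her c` contains two nonzero positive elements with zero product. -/
def HasOrthogonalPair (c : B) : Prop :=
  ∃ x ∈ her c, ∃ y ∈ her c, 0 ≤ x ∧ 0 ≤ y ∧ x ≠ 0 ∧ y ≠ 0 ∧ x * y = 0

omit [StarOrderedRing B] in
theorem HasOrthogonalPair.mono (hx : x ∈ her c) : HasOrthogonalPair x → HasOrthogonalPair c :=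
  fun ⟨y, hy, z, hz, h⟩ => ⟨y, her_subset_her hx hy, z, her_subset_her hx hz, h⟩

theorem hasOrthogonalPair_of_mem_quasispectrum {s l : ℝ} (hy : 0 ≤ y) (hs : s ∈ quasispectrum ℝ y)
    (hl : l ∈ quasispectrum ℝ y) (h0 : 0 < s) (hsl : s < l) : HasOrthogonalPair y := by
  set m := (s + l) / 2 with hm
  have hne : ∀ {f : ℝ → ℝ} {u : ℝ}, u ∈ quasispectrum ℝ y → Continuous f → f 0 = 0 → 0 < f u →
      cfcₙ f y ≠ 0 := fun hu hf hf0 hfu =>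
    norm_pos_iff.1 ((norm_pos_iff.2 hfu.ne').trans_le
      (norm_apply_le_norm_cfcₙ _ y hu hf.continuousOn hf0 (.of_nonneg hy)))
  refine ⟨cfcₙ (fun t => max (t * (m - t)) 0) y, cfcₙ_mem_her hy _,
    cfcₙ (fun t => max (t - m) 0) y, cfcₙ_mem_her hy _,
    cfcₙ_nonneg fun _ _ => le_max_right _ _, cfcₙ_nonneg fun _ _ => le_max_right _ _,
    hne hs (by fun_prop) (by simp) (lt_max_of_lt_left (mul_pos h0 (by linarith))),
    hne hl (by fun_prop) (max_eq_right (by linarith)) (lt_max_of_lt_left (by linarith)), ?_⟩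
  rw [← cfcₙ_mul (fun t => max (t * (m - t)) 0) (fun t => max (t - m) 0) y (by fun_prop)
    (by simp) (by fun_prop) (max_eq_right (by linarith)), ← cfcₙ_const_zero ℝ y]
  refine cfcₙ_congr fun t _ => ?_
  rcases le_total t m with h | h
  · rw [max_eq_right (sub_nonpos.2 h), mul_zero]
  · rw [max_eq_right (mul_nonpos_of_nonneg_of_nonpos (by linarith) (sub_nonpos.2 h)), zero_mul]

theorem exists_mul_self_eq_smul_of_not_hasOrthogonalPair (hy : 0 ≤ y) (hy0 : y ≠ 0)
    (h : ¬ HasOrthogonalPair y) : ∃ l : ℝ, 0 < l ∧ y * y = l • y := by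
  have hnonneg := quasispectrum_nonneg_of_nonneg (𝕜 := ℝ) y hy
  obtain ⟨l, hl, hl0⟩ : ∃ l ∈ quasispectrum ℝ y, l ≠ 0 := by
    by_contra! hzero
    refine hy0 ?_
    rw [← cfcₙ_id' ℝ y, ← cfcₙ_const_zero ℝ y]
    exact cfcₙ_congr hzero
  have hlpos : 0 < l := (hnonneg l hl).lt_of_ne' hl0
  have hspec : ∀ s ∈ quasispectrum ℝ y, s = 0 ∨ s = l := fun s hs => by
    by_contra! hcon
    have hspos : 0 < s := (hnonneg s hs).lt_of_ne' hcon.1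
    rcases hcon.2.lt_or_gt with hlt | hlt
    · exact h (hasOrthogonalPair_of_mem_quasispectrum hy hs hl hspos hlt)
    · exact h (hasOrthogonalPair_of_mem_quasispectrum hy hl hs hlpos hlt)
  refine ⟨l, hlpos, ?_⟩
  conv_lhs => rw [← cfcₙ_id' ℝ y]
  conv_rhs => rw [← cfcₙ_id' ℝ y]
  rw [← cfcₙ_mul (fun t : ℝ => t) (fun t : ℝ => t) y, ← cfcₙ_smul l (fun t : ℝ => t) y]
  refine cfcₙ_congr fun t ht => ?_
  rcases hspec t ht with rfl | rfl <;> simp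

theorem exists_isStarProjection_smul (hy : 0 ≤ y) (hy0 : y ≠ 0) (h : ¬ HasOrthogonalPair y) :
    ∃ r : ℝ, 0 < r ∧ IsStarProjection (r • y) := by
  obtain ⟨l, hl, hll⟩ := exists_mul_self_eq_smul_of_not_hasOrthogonalPair hy hy0 h
  refine ⟨l⁻¹, inv_pos.2 hl, ?_, .of_nonneg (smul_nonneg (inv_pos.2 hl).le hy)⟩
  rw [IsIdempotentElem, smul_mul_smul_comm, hll, smul_smul, mul_assoc, inv_mul_cancel₀ hl.ne',
    mul_one]

theorem exists_eq_smul_of_mem_her (hp : IsStarProjection p) (h : ¬ HasOrthogonalPair p)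
    (hy : 0 ≤ y) (hyp : y ∈ her p) : ∃ r : ℝ, y = r • p := by
  by_cases hy0 : y = 0
  · exact ⟨0, by rw [hy0, zero_smul]⟩
  obtain ⟨r, hr, hq⟩ := exists_isStarProjection_smul hy hy0 fun hpair => h (hpair.mono hyp)
  have hqp : r • y ∈ her p := smul_mem_her r hyp
  have hp' : p ∈ her p := self_mem_her hp.nonneg
  obtain ⟨hpq, hqp'⟩ := mul_eq_of_mem_her hp.isIdempotentElem.eq hqp
  have hdiff : IsStarProjection (p - r • y) := by
    refine ⟨?_, hp.isSelfAdjoint.sub hq.isSelfAdjoint⟩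
    rw [IsIdempotentElem, sub_mul, mul_sub, mul_sub, hpq, hqp', hp.isIdempotentElem.eq,
      hq.isIdempotentElem.eq, sub_self, sub_zero]
  have horth : r • y * (p - r • y) = 0 := by
    rw [mul_sub, hqp', hq.isIdempotentElem.eq, sub_self]
  by_contra! hne
  refine h ⟨r • y, hqp, p - r • y, sub_mem_her hp' hqp, hq.nonneg, hdiff.nonneg,
    smul_ne_zero hr.ne' hy0, fun hzero => hne r⁻¹ ?_, horth⟩
  rw [sub_eq_zero.1 hzero, inv_smul_smul₀ hr.ne']

theorem isMinimalProjection_of_not_hasOrthogonalPair (hp : IsStarProjection p) (hp0 : p ≠ 0)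
    (h : ¬ HasOrthogonalPair p) : IsMinimalProjection p := by
  refine ⟨hp, hp0, fun z => ?_⟩
  have hz : z ∈ Submodule.span ℂ {a : B | 0 ≤ a} := CStarAlgebra.span_nonneg (A := B) ▸ trivial
  induction hz using Submodule.span_induction with
  | mem x hx =>
    obtain ⟨r, hr⟩ := exists_eq_smul_of_mem_her hp h (hp.isSelfAdjoint.conjugate_nonneg hx)
      (mul_mul_mem_her _ _)
    exact ⟨r, by rw [hr, Complex.coe_smul]⟩
  | zero => exact ⟨0, by simp⟩
  | add x y _ _ hx hy =>
    obtain ⟨⟨μ, hμ⟩, ν, hν⟩ := And.intro hx hy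
    exact ⟨μ + ν, by rw [mul_add, add_mul, hμ, hν, add_smul]⟩
  | smul r x _ hx =>
    obtain ⟨μ, hμ⟩ := hx
    exact ⟨r * μ, by rw [mul_smul_comm, smul_mul_assoc, hμ, smul_smul]⟩

theorem exists_isMinimalProjection (hc : 0 ≤ c) (hc0 : c ≠ 0) (h : ¬ HasOrthogonalPair c) :
    ∃ p : B, IsMinimalProjection p := by
  obtain ⟨r, hr, hp⟩ := exists_isStarProjection_smul hc hc0 h
  exact ⟨r • c, isMinimalProjection_of_not_hasOrthogonalPair hp (smul_ne_zero hr.ne' hc0)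
    fun hpair => h (hpair.mono (smul_mem_her r (self_mem_her hc)))⟩

end Simple

/-! ### Compact operators -/

section CompactOperators

variable {𝕜 E F : Type*} [RCLike 𝕜] [NormedAddCommGroup E] [InnerProductSpace 𝕜 E]
  [NormedAddCommGroup F] [InnerProductSpace 𝕜 F]

theorem exists_norm_starProjection_comp_sub_le {T : F →L[𝕜] E} (hT : IsCompactOperator T)
    {ε : ℝ} (hε : 0 < ε) :
    ∃ (V : Submodule 𝕜 E) (_ : FiniteDimensional 𝕜 V), ‖V.starProjection ∘L T - T‖ ≤ ε := by
  have hK := hT.isCompact_closure_image_closedBall (f := (T : F →ₗ[𝕜] E)) 1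
  obtain ⟨t, -, htfin, htcover⟩ := hK.finite_cover_balls hε
  have hfin : FiniteDimensional 𝕜 (Submodule.span 𝕜 t) := .span_of_finite 𝕜 htfin
  refine ⟨Submodule.span 𝕜 t, hfin, ContinuousLinearMap.opNorm_le_of_unit_norm hε.le
    fun z hz => ?_⟩
  rw [sub_apply, ContinuousLinearMap.comp_apply, norm_sub_rev,
    Submodule.starProjection_minimal]
  obtain ⟨y, hyt, hy⟩ := Set.mem_iUnion₂.1 (htcover (subset_closure ⟨z, by simp [hz], rfl⟩))
  exact (ciInf_le ⟨0, Set.forall_mem_range.mpr fun _ => norm_nonneg _⟩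
    (⟨y, Submodule.subset_span hyt⟩ : Submodule.span 𝕜 t)).trans (mem_ball_iff_norm.1 hy).le

theorem mem_of_isCompactOperator [CompleteSpace E] [CompleteSpace F]
    {S : AddSubmonoid (F →L[𝕜] E)} (hS : IsClosed (S : Set (F →L[𝕜] E)))
    (hrank : ∀ x y, InnerProductSpace.rankOne 𝕜 x y ∈ S) {T : F →L[𝕜] E}
    (hT : IsCompactOperator T) : T ∈ S := by
  refine hS.closure_subset (Metric.mem_closure_iff.2 fun ε hε => ?_)
  obtain ⟨V, hV, hle⟩ := exists_norm_starProjection_comp_sub_le hT (half_pos hε)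
  refine ⟨V.starProjection ∘L T, ?_, ?_⟩
  · rw [(stdOrthonormalBasis 𝕜 V).starProjection_eq_sum_rankOne,
      ContinuousLinearMap.finsetSum_comp]
    exact S.sum_mem fun i _ => by
      rw [InnerProductSpace.rankOne_comp]
      exact hrank _ _
  · rw [dist_comm, dist_eq_norm]
    exact hle.trans_lt (half_lt_self hε)

theorem isSeparable_range_of_isCompactOperator {T : F →L[𝕜] E} (hT : IsCompactOperator T) :
    TopologicalSpace.IsSeparable (Set.range T) := by
  have hcover : Set.range T ⊆
      ⋃ n : ℕ, closure ((T : F →ₗ[𝕜] E) '' Metric.closedBall 0 n) := by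
    rintro _ ⟨x, rfl⟩
    obtain ⟨n, hn⟩ := exists_nat_ge ‖x‖
    exact Set.mem_iUnion.2 ⟨n, subset_closure ⟨x, by simpa using hn, rfl⟩⟩
  exact .mono (.iUnion fun n => (hT.isCompact_closure_image_closedBall _).isSeparable) hcover

theorem countable_of_orthonormal [TopologicalSpace.SeparableSpace E] {ι : Type*} {v : ι → E}
    (hv : Orthonormal 𝕜 v) : Countable ι := by
  have hdisj : Pairwise (Function.onFun Disjoint fun i => Metric.ball (v i) (1 / 2)) := by
    intro i j hij
    refine Metric.ball_disjoint_ball ?_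
    have hsq : ‖v i - v j‖ ^ 2 = 2 := by
      rw [norm_sub_sq (𝕜 := 𝕜), hv.2 hij, hv.1 i, hv.1 j]
      norm_num
    rw [dist_eq_norm]
    nlinarith [norm_nonneg (v i - v j)]
  exact hdisj.countable_of_isOpen_disjoint (fun _ => Metric.isOpen_ball)
    fun i => ⟨v i, Metric.mem_ball_self (by norm_num)⟩

variable (𝕜 E) in
theorem exists_linearIsometryEquiv_lp [CompleteSpace E] [TopologicalSpace.SeparableSpace E] :
    ∃ s : Set ℕ, Nonempty (E ≃ₗᵢ[𝕜] lp (fun _ : s => 𝕜) 2) := by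
  obtain ⟨w, b, -⟩ := exists_hilbertBasis 𝕜 E
  have := countable_of_orthonormal b.orthonormal
  obtain ⟨f, hf⟩ := exists_injective_nat w
  set e := Equiv.ofInjective f hf
  have hspan : ⊤ ≤ (Submodule.span 𝕜 (Set.range (b ∘ e.symm))).topologicalClosure := by
    rw [e.symm.surjective.range_comp, b.dense_span]
  exact ⟨Set.range f, ⟨(HilbertBasis.mk (b.orthonormal.comp _ e.symm.injective) hspan).repr⟩⟩

theorem isCompactOperator_conjStarAlgEquiv [CompleteSpace E] [CompleteSpace F] (e : E ≃ₗᵢ[𝕜] F)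
    {T : E →L[𝕜] E} (hT : IsCompactOperator T) : IsCompactOperator (e.conjStarAlgEquiv T) :=
  (hT.clm_comp (e.toContinuousLinearEquiv : E →L[𝕜] F)).comp_clm
    (e.symm.toContinuousLinearEquiv : F →L[𝕜] E)

end CompactOperators

section Elementary

variable {B E : Type*} [NonUnitalCStarAlgebra B] [NormedAddCommGroup E] [InnerProductSpace ℂ E]
  [CompleteSpace E] {φ : B →⋆ₙₐ[ℂ] (E →L[ℂ] E)}

-- `IsElementary` only allows Hilbert spaces in `Type`, whereas `E` lives in any universe.
theorem isElementary_of_linearIsometryEquiv {H : Type} [NormedAddCommGroup H]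
    [InnerProductSpace ℂ H] [CompleteSpace H] (e : E ≃ₗᵢ[ℂ] H) (hinj : Function.Injective φ)
    (hrange : Set.range φ = {T : E →L[ℂ] E | IsCompactOperator T}) : IsElementary B := by
  let ψ : B →⋆ₙₐ[ℂ] (H →L[ℂ] H) := e.conjStarAlgEquiv.toNonUnitalStarAlgHom.comp φ
  refine ⟨H, inferInstance, inferInstance, inferInstance, ψ,
    e.conjStarAlgEquiv.injective.comp hinj, Set.Subset.antisymm ?_ fun T hT => ?_⟩
  · rintro _ ⟨a, rfl⟩
    exact isCompactOperator_conjStarAlgEquiv e (hrange.subset ⟨a, rfl⟩)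
  · obtain ⟨a, ha⟩ := hrange.superset (isCompactOperator_conjStarAlgEquiv e.symm hT)
    exact ⟨a, (congrArg e.conjStarAlgEquiv ha).trans (e.conjStarAlgEquiv.apply_symm_apply T)⟩

theorem isElementary_of_range_eq [TopologicalSpace.SeparableSpace E]
    (hinj : Function.Injective φ)
    (hrange : Set.range φ = {T : E →L[ℂ] E | IsCompactOperator T}) : IsElementary B := by
  obtain ⟨s, ⟨e⟩⟩ := exists_linearIsometryEquiv_lp ℂ E
  exact isElementary_of_linearIsometryEquiv e hinj hrange

end Elementary

/-! ### The representation on a minimal left ideal -/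

section LeftIdeal

variable {B : Type*} [NonUnitalCStarAlgebra B] {p : B}

/-- The left ideal `B p` of a projection `p`, encoded as the fixed space of `x ↦ x p`. -/
def leftIdeal (p : B) : Submodule ℂ B := (LinearMap.mulRight ℂ p).eqLocus LinearMap.id

theorem mem_leftIdeal {x : B} : x ∈ leftIdeal p ↔ x * p = x := Iff.rfl

theorem leftIdeal_mul (x : leftIdeal p) : (x : B) * p = x := x.2

theorem isClosed_leftIdeal (p : B) : IsClosed (leftIdeal p : Set B) :=
  isClosed_eq (f := fun x : B => x * p) (by fun_prop) continuous_id

instance (p : B) : CompleteSpace (leftIdeal p) := (isClosed_leftIdeal p).completeSpace_coe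

theorem mul_mem_leftIdeal (a : B) {x : B} (hx : x ∈ leftIdeal p) : a * x ∈ leftIdeal p := by
  rw [mem_leftIdeal, mul_assoc, mem_leftIdeal.1 hx]

theorem mul_self_mem_leftIdeal (hp : IsStarProjection p) (y : B) : y * p ∈ leftIdeal p :=
  mul_mem_leftIdeal y (mem_leftIdeal.2 hp.isIdempotentElem)

/-- Left multiplication by `a` on `B p`. -/
def leftMul (p a : B) : leftIdeal p →L[ℂ] leftIdeal p :=
  (((LinearMap.mulLeft ℂ a).restrict fun _ => mul_mem_leftIdeal a).mkContinuous ‖a‖)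
    fun x => norm_mul_le a (x : B)

theorem leftMul_coe (a : B) (x : leftIdeal p) : (leftMul p a x : B) = a * x := rfl

theorem IsMinimalProjection.norm_eq_one (hp : IsMinimalProjection p) : ‖p‖ = 1 := by
  have h := CStarRing.norm_star_mul_self (x := p)
  rw [hp.isStarProjection.isSelfAdjoint.star_eq, hp.isStarProjection.isIdempotentElem] at h
  exact (mul_eq_left₀ (norm_ne_zero_iff.2 hp.ne_zero)).1 h.symm

theorem star_mul_eq_conj (hp : IsStarProjection p) (x y : leftIdeal p) :
    star (x : B) * y = p * (star (x : B) * y) * p := by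
  conv_lhs => rw [← leftIdeal_mul x, ← leftIdeal_mul y, star_mul, hp.isSelfAdjoint.star_eq]
  simp only [mul_assoc]

/-- The scalar `μ` with `x* y = μ p`, the inner product of the Hilbert space `B p`. -/
def IsMinimalProjection.coeff (hp : IsMinimalProjection p) (x y : leftIdeal p) : ℂ :=
  (hp.exists_eq_smul (star (x : B) * y)).choose

theorem IsMinimalProjection.star_mul_eq_coeff_smul (hp : IsMinimalProjection p)
    (x y : leftIdeal p) : star (x : B) * y = hp.coeff x y • p := by
  conv_lhs => rw [star_mul_eq_conj hp.isStarProjection]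
  exact (hp.exists_eq_smul _).choose_spec

theorem IsMinimalProjection.coeff_eq (hp : IsMinimalProjection p) {x y : leftIdeal p} {μ : ℂ}
    (h : star (x : B) * y = μ • p) : hp.coeff x y = μ :=
  smul_left_injective ℂ hp.ne_zero ((hp.star_mul_eq_coeff_smul x y).symm.trans h)

variable [PartialOrder B] [StarOrderedRing B]

theorem IsMinimalProjection.conj_eq_norm_smul (hp : IsMinimalProjection p) {z : B} (hz : 0 ≤ z) :
    p * z * p = ‖p * z * p‖ • p := by
  have hpos : 0 ≤ p * z * p := hp.isStarProjection.isSelfAdjoint.conjugate_nonneg hz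
  obtain ⟨μ, hμ⟩ := hp.exists_eq_smul z
  have hreal : star μ = μ := by
    have h := (IsSelfAdjoint.of_nonneg hpos).star_eq
    rw [hμ, star_smul, hp.isStarProjection.isSelfAdjoint.star_eq] at h
    exact smul_left_injective ℂ hp.ne_zero h
  obtain ⟨r, rfl⟩ := Complex.conj_eq_iff_real.1 hreal
  rw [Complex.coe_smul] at hμ
  rw [hμ] at hpos ⊢
  rcases le_total 0 r with hr | hr
  · rw [norm_smul, hp.norm_eq_one, mul_one, Real.norm_of_nonneg hr]
  · have hneg : r • p ≤ 0 := smul_nonpos_of_nonpos_of_nonneg hr hp.isStarProjection.nonneg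
    rw [le_antisymm hneg hpos, norm_zero, zero_smul]

theorem IsMinimalProjection.star_mul_self_eq_smul (hp : IsMinimalProjection p) (x : leftIdeal p) :
    star (x : B) * x = ((‖x‖ ^ 2 : ℝ) : ℂ) • p := by
  have h := hp.conj_eq_norm_smul (star_mul_self_nonneg (x : B))
  rwa [← star_mul_eq_conj hp.isStarProjection, CStarRing.norm_star_mul_self, ← sq,
    ← Complex.coe_smul] at h

instance [hp : Fact (IsMinimalProjection p)] : InnerProductSpace ℂ (leftIdeal p) where
  inner x y := hp.out.coeff x y
  norm_sq_eq_re_inner x := by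
    rw [hp.out.coeff_eq (hp.out.star_mul_self_eq_smul x), RCLike.re_eq_complex_re,
      Complex.ofReal_re]
  conj_inner_symm x y := by
    refine (hp.out.coeff_eq ?_).symm
    have h := congrArg star (hp.out.star_mul_eq_coeff_smul y x)
    rwa [star_mul, star_star, star_smul, hp.out.isStarProjection.isSelfAdjoint.star_eq] at h
  add_left x y z := hp.out.coeff_eq <| by
    rw [Submodule.coe_add, star_add, add_mul, hp.out.star_mul_eq_coeff_smul x z,
      hp.out.star_mul_eq_coeff_smul y z, ← add_smul]
  smul_left x y r := hp.out.coeff_eq <| by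
    rw [Submodule.coe_smul, star_smul, smul_mul_assoc, hp.out.star_mul_eq_coeff_smul x y,
      smul_smul, starRingEnd_apply]

variable [hp : Fact (IsMinimalProjection p)]

theorem star_mul_eq_inner_smul (x y : leftIdeal p) : star (x : B) * y = inner ℂ x y • p :=
  hp.out.star_mul_eq_coeff_smul x y

theorem inner_eq_of_star_mul_eq {x y : leftIdeal p} {μ : ℂ} (h : star (x : B) * y = μ • p) :
    inner ℂ x y = μ :=
  hp.out.coeff_eq h

variable (p) in
/-- The representation of `B` on the Hilbert space `B p` by left multiplication. -/
def leftRep : B →⋆ₙₐ[ℂ] (leftIdeal p →L[ℂ] leftIdeal p) where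
  toFun := leftMul p
  map_smul' c a := by ext x; simp [leftMul_coe, smul_mul_assoc]
  map_zero' := by ext x; simp [leftMul_coe]
  map_add' a b := by ext x; simp [leftMul_coe, add_mul]
  map_mul' a b := by ext x; simp [leftMul_coe, mul_assoc]
  map_star' a := by
    rw [ContinuousLinearMap.star_eq_adjoint, ContinuousLinearMap.eq_adjoint_iff]
    intro x y
    refine inner_eq_of_star_mul_eq ?_
    rw [leftMul_coe, star_mul, star_star, ← star_mul_eq_inner_smul, leftMul_coe, mul_assoc]

theorem leftRep_coe (a : B) (x : leftIdeal p) : (leftRep p a x : B) = a * x := rfl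

theorem leftRep_mul_star (x y : leftIdeal p) :
    leftRep p ((x : B) * star (y : B)) = InnerProductSpace.rankOne ℂ x y := by
  ext z
  rw [leftRep_coe, mul_assoc, star_mul_eq_inner_smul, mul_smul_comm, leftIdeal_mul,
    InnerProductSpace.rankOne_apply, Submodule.coe_smul]

theorem leftRep_injective (hs : IsSimpleCStar B) : Function.Injective (leftRep p) := by
  rw [injective_iff_map_eq_zero]
  intro a ha
  by_contra ha0
  obtain ⟨w, hw⟩ := hs.exists_mul_mul_ne_zero ha0 hp.out.ne_zero
  refine hw ?_
  have h := leftRep_coe a ⟨w * p, mul_self_mem_leftIdeal hp.out.isStarProjection w⟩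
  rw [mul_assoc, ← h, ha, zero_apply, Submodule.coe_zero]

theorem isometry_leftRep (hs : IsSimpleCStar B) : Isometry (leftRep p) :=
  NonUnitalStarAlgHom.isometry (leftRep p) (leftRep_injective hs)

theorem isCompactOperator_leftRep (hs : IsSimpleCStar B) (a : B) :
    IsCompactOperator (leftRep p a) := by
  have hideal : IsIdealIn B Set.univ {a | IsCompactOperator (leftRep p a)} := by
    refine ⟨Set.subset_univ _, ?_, fun x hx y hy => ?_, fun x hx => ?_,
      fun x hx y _ => ⟨?_, ?_⟩⟩ <;> simp only [Set.mem_ofPred_eq] at *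
    · rw [map_zero]; exact isCompactOperator_zero
    · rw [map_add]; exact hx.add hy
    · rw [map_neg]; exact hx.neg
    · rw [map_mul]; exact hx.comp_clm (leftRep p y)
    · rw [map_mul]; exact hx.clm_comp (leftRep p y)
  have hclosed : IsClosed {a | IsCompactOperator (leftRep p a)} :=
    (isClosed_setOfPred_isCompactOperator (σ₁₂ := RingHom.id ℂ)).preimage
      (isometry_leftRep hs).continuous
  have hpp : p * p = p := hp.out.isStarProjection.isIdempotentElem
  have hmem : IsCompactOperator (leftRep p p) := by
    have h := leftRep_mul_star (p := p) ⟨p, hpp⟩ ⟨p, hpp⟩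
    rw [hp.out.isStarProjection.isSelfAdjoint.star_eq, hpp] at h
    rw [h, InnerProductSpace.rankOne_def']
    have hspan : IsCompactOperator
        (ContinuousLinearMap.toSpanSingleton ℂ (⟨p, hpp⟩ : leftIdeal p) : ℂ →L[ℂ] leftIdeal p) :=
      isCompactOperator_of_locallyCompactSpace_rng _
    exact hspan.comp_clm _
  exact hs.mem_of_isIdealIn hideal hclosed hmem hp.out.ne_zero a

theorem range_leftRep (hs : IsSimpleCStar B) :
    Set.range (leftRep p) = {T : leftIdeal p →L[ℂ] leftIdeal p | IsCompactOperator T} := by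
  refine Set.Subset.antisymm ?_ fun T hT => ?_
  · rintro _ ⟨a, rfl⟩
    exact isCompactOperator_leftRep hs a
  · exact mem_of_isCompactOperator (S := AddMonoidHom.mrange (leftRep p))
      (isometry_leftRep hs).isClosedEmbedding.isClosed_range
      (fun x y => ⟨_, leftRep_mul_star x y⟩) hT

theorem separableSpace_leftIdeal (hs : IsSimpleCStar B) (hσ : SigmaUnital B) :
    TopologicalSpace.SeparableSpace (leftIdeal p) := by
  obtain ⟨h, -, hh⟩ := hσ
  have hsep := isSeparable_range_of_isCompactOperator (isCompactOperator_leftRep (p := p) hs h)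
  rw [← TopologicalSpace.isSeparable_univ_iff]
  refine hsep.closure.mono fun x _ => ?_
  set π : B → leftIdeal p :=
    fun y => ⟨y * p, mul_self_mem_leftIdeal hp.out.isStarProjection y⟩ with hπ
  have hx : (x : B) ∈ her h := hh ▸ trivial
  rw [← (Subtype.ext (leftIdeal_mul x) : π x = x)]
  refine map_mem_closure (by fun_prop : Continuous π) hx ?_
  rintro _ ⟨y, rfl⟩
  exact ⟨π (y * h), Subtype.ext (by simp only [hπ, leftRep_coe, mul_assoc])⟩

omit hp in
theorem isElementary_of_isMinimalProjection (hs : IsSimpleCStar B) (hσ : SigmaUnital B)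
    (hp : IsMinimalProjection p) : IsElementary B := by
  have : Fact (IsMinimalProjection p) := ⟨hp⟩
  have := separableSpace_leftIdeal (p := p) hs hσ
  exact isElementary_of_range_eq (leftRep_injective (p := p) hs) (range_leftRep hs)

end LeftIdeal

/-! ### Small elements of hereditary subalgebras -/

section SmallElements

variable {B : Type*} [NonUnitalCStarAlgebra B] {b c d x : B}

theorem mul_mul_ne_zero_of_mem_her (hd : d ∈ her (b * b)) (hsa : IsSelfAdjoint d) (hd0 : d ≠ 0) :
    b * d * b ≠ 0 := by
  intro h
  have hleft : d * (d * b) = 0 := mul_eq_zero_of_mem_her hd (by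
    rw [mul_assoc, ← mul_assoc b d, h, mul_zero])
  have hcube : d * d * d = 0 := mul_eq_zero_of_mem_her_right hd (by
    rw [← mul_assoc, mul_assoc d, hleft, zero_mul])
  have hsq : star (d * d) * (d * d) = 0 := by
    rw [star_mul, hsa.star_eq, ← mul_assoc, hcube, zero_mul]
  rw [CStarRing.star_mul_self_eq_zero_iff] at hsq
  exact hd0 ((CStarRing.star_mul_self_eq_zero_iff d).1 (by rwa [hsa.star_eq]))

variable [PartialOrder B] [StarOrderedRing B]

theorem hasOrthogonalPair_of_not_isElementary (hs : IsSimpleCStar B) (hσ : SigmaUnital B)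
    (hne : ¬ IsElementary B) (hc : 0 ≤ c) (hc0 : c ≠ 0) : HasOrthogonalPair c := by
  by_contra h
  obtain ⟨p, hp⟩ := exists_isMinimalProjection hc hc0 h
  exact hne (isElementary_of_isMinimalProjection hs hσ hp)

theorem HasOrthogonalPair.exists_mul_self_eq_zero (hs : IsSimpleCStar B)
    (h : HasOrthogonalPair c) : ∃ x ∈ her c, x ≠ 0 ∧ x * x = 0 := by
  obtain ⟨y, hy, z, hz, hy0, hz0, hyne, hzne, hyz⟩ := h
  obtain ⟨w, hw⟩ := hs.exists_mul_mul_ne_zero hyne hzne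
  have hzy : z * y = 0 :=
    ((IsSelfAdjoint.of_nonneg hy0).commute_of_mul_eq_zero (.of_nonneg hz0) hyz).eq ▸ hyz
  refine ⟨y * w * z, mul_mul_mem_her_of_mem w hy hz, hw, ?_⟩
  rw [mul_assoc (y * w), ← mul_assoc z, ← mul_assoc z, hzy, zero_mul, zero_mul, mul_zero]

theorem two_mul_dTau_star_mul_self_le (τ : QuasiTrace B) (hc : 0 ≤ c) (hx : x ∈ her c)
    (hxx : x * x = 0) : 2 * dTau τ (star x * x) ≤ dTau τ c := by
  have hstar : star x * star x = 0 := by rw [← star_mul, hxx, star_zero]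
  have horth : x * star x * (star x * x) = 0 := by
    rw [mul_assoc, ← mul_assoc (star x), hstar, zero_mul, mul_zero]
  have hsx := star_mem_her (.of_nonneg hc) hx
  have h := dTau_add_le_of_mem_her τ hc (mul_star_self_nonneg x) (star_mul_self_nonneg x) horth
    (mul_mem_her hx hsx) (mul_mem_her hsx hx)
  rwa [← dTau_star_mul_self, ← two_mul] at h

end SmallElements

section SmallInStabilization

variable (SB : Stabilization A W) {a c x : A} {b : W}

namespace Stabilization

omit [PartialOrder A] [StarOrderedRing A] [PartialOrder W] [StarOrderedRing W]

theorem embHom_mem_her (hx : x ∈ her c) : SB.embHom x ∈ her (SB.embHom c) := by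
  refine map_mem_closure SB.isometry_embHom.continuous hx ?_
  rintro _ ⟨y, rfl⟩
  exact ⟨SB.embHom y, by rw [map_mul, map_mul]⟩

theorem exists_embHom_eq_conj (j : ℕ) (a : A) (w : W) :
    ∃ d, SB.embHom d = star (SB.emb j 0 a) * w * SB.emb j 0 a := by
  refine SB.induction (p := fun w => star (SB.emb j 0 a) * w * SB.emb j 0 a ∈ Set.range SB.embHom)
    (SB.isometry_embHom.isClosedEmbedding.isClosed_range.preimage
      (by fun_prop : Continuous fun w => star (SB.emb j 0 a) * w * SB.emb j 0 a))
    ?_ (fun k l b => ?_) w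
  · rintro x y ⟨u, hu⟩ ⟨v, hv⟩
    exact ⟨u + v, by rw [map_add, mul_add, add_mul, hu, hv]⟩
  · rw [SB.emb_star, SB.emb_mul]
    split_ifs
    · rw [SB.emb_mul]
      split_ifs
      · exact ⟨_, rfl⟩
      · exact ⟨0, map_zero _⟩
    · exact ⟨0, by rw [map_zero, zero_mul]⟩

theorem exists_mul_emb_ne_zero {w : W} (hw : w ≠ 0) : ∃ (j : ℕ) (a : A), w * SB.emb j 0 a ≠ 0 := by
  by_contra! hcol
  have hemb : ∀ j k a, w * SB.emb j k a = 0 := fun j k a => by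
    have hrow : SB.emb j k a * star (SB.emb j k a) = SB.emb j 0 a * star (SB.emb j 0 a) := by
      simp only [SB.emb_star, SB.emb_mul, if_true]
    rw [← CStarRing.mul_star_self_eq_zero_iff, star_mul, mul_assoc, ← mul_assoc (SB.emb j k a),
      hrow, mul_assoc, ← mul_assoc w, hcol, zero_mul]
  have hall : w * star w = 0 := SB.induction (p := fun y => w * y = 0)
    (isClosed_eq (by fun_prop) continuous_const)
    (fun x y hx hy => by rw [mul_add, hx, hy, add_zero]) hemb (star w)
  exact hw ((CStarRing.mul_star_self_eq_zero_iff w).1 hall)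

end Stabilization

variable (hs : IsSimpleCStar A) (hσ : SigmaUnital A) (hne : ¬ IsElementary A)
include hs hσ hne

theorem exists_mem_her_two_mul_dTau_embHom_le (hc : 0 ≤ c) (hc0 : c ≠ 0) :
    ∃ d ∈ her c, 0 ≤ d ∧ d ≠ 0 ∧
      ∀ τ : QuasiTrace W, 2 * dTau τ (SB.embHom d) ≤ dTau τ (SB.embHom c) := by
  obtain ⟨x, hx, hx0, hxx⟩ :=
    (hasOrthogonalPair_of_not_isElementary hs hσ hne hc hc0).exists_mul_self_eq_zero hs
  refine ⟨star x * x, mul_mem_her (star_mem_her (.of_nonneg hc) hx) hx, star_mul_self_nonneg x,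
    fun h => hx0 ((CStarRing.star_mul_self_eq_zero_iff x).1 h), fun τ => ?_⟩
  rw [map_mul, map_star]
  exact two_mul_dTau_star_mul_self_le τ (SB.embHom_nonneg hc) (SB.embHom_mem_her hx)
    (by rw [← map_mul, hxx, map_zero])

theorem exists_mem_her_dTau_embHom_le_pow (hc : 0 ≤ c) (hc0 : c ≠ 0) (n : ℕ) :
    ∃ d ∈ her c, 0 ≤ d ∧ d ≠ 0 ∧
      ∀ τ ∈ closure (QTSet SB), dTau τ (SB.embHom d) ≤ 2⁻¹ ^ n := by
  induction n with
  | zero =>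
    obtain ⟨s, hs, rfl⟩ := exists_isSelfAdjoint_mul_self hc
    refine ⟨s * s, self_mem_her hc, hc, hc0, fun τ hτ => ?_⟩
    have h := dTau_star_emb_mul_emb_le_one SB hτ 0 0 s
    rwa [SB.emb_star, hs.star_eq, SB.emb_mul, if_pos rfl, ← SB.embHom_apply, ← pow_zero] at h
  | succ n ih =>
    obtain ⟨d, hd, hd0, hdne, hle⟩ := ih
    obtain ⟨d', hd', hd0', hdne', hle'⟩ :=
      exists_mem_her_two_mul_dTau_embHom_le SB hs hσ hne hd0 hdne
    refine ⟨d', her_subset_her hd hd', hd0', hdne', fun τ hτ => ?_⟩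
    rw [pow_succ, ← div_eq_mul_inv, ENNReal.le_div_iff_mul_le (by simp) (by simp), mul_comm]
    exact (hle' τ).trans (hle τ hτ)

theorem exists_mem_her_dTau_le (hb : 0 ≤ b) (hb0 : b ≠ 0) {r : ℝ≥0∞} (hr : r ≠ 0) :
    ∃ c ∈ her b, 0 ≤ c ∧ c ≠ 0 ∧ ∀ τ ∈ closure (QTSet SB), dTau τ c ≤ r := by
  have hbsa : star b = b := (IsSelfAdjoint.of_nonneg hb).star_eq
  obtain ⟨j, β, hx0⟩ := SB.exists_mul_emb_ne_zero hb0
  set x := b * SB.emb j 0 β with hx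
  obtain ⟨u, hu⟩ : ∃ u, SB.embHom u = star x * x := by
    obtain ⟨u, hu⟩ := SB.exists_embHom_eq_conj j β (b * b)
    exact ⟨u, by simp only [hu, hx, star_mul, hbsa, mul_assoc]⟩
  have hu0 : u ≠ 0 := by
    rintro rfl
    exact hx0 ((CStarRing.star_mul_self_eq_zero_iff x).1 (by rw [← hu, map_zero]))
  have husa : star u = u := SB.isometry_embHom.injective (by
    rw [map_star, hu, star_mul, star_star])
  have huu0 : u * u ≠ 0 := fun h =>
    hu0 ((CStarRing.star_mul_self_eq_zero_iff u).1 (by rwa [husa]))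
  obtain ⟨n, hn⟩ := ENNReal.exists_inv_two_pow_lt hr
  obtain ⟨d, hd, hd0, hdne, hdle⟩ := exists_mem_her_dTau_embHom_le_pow SB hs hσ hne
    (IsSelfAdjoint.mul_self_nonneg husa) huu0 n
  have hembd := SB.embHom_nonneg hd0
  refine ⟨x * SB.embHom d * star x, ?_, star_right_conjugate_nonneg hembd x, fun h => ?_,
    fun τ hτ => ?_⟩
  · have hconj := mul_mul_mem_her b (SB.emb j 0 β * SB.embHom d * star (SB.emb j 0 β))
    simpa only [hx, star_mul, hbsa, mul_assoc] using hconj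
  · refine mul_mul_ne_zero_of_mem_her hd (.of_nonneg hd0) hdne (SB.isometry_embHom.injective ?_)
    calc SB.embHom (u * d * u) = star x * (x * SB.embHom d * star x) * x := by
          simp only [map_mul, hu, mul_assoc]
      _ = SB.embHom 0 := by rw [h, mul_zero, zero_mul, map_zero]
  · have hconj := dTau_star_mul_mul_le τ (star x) hembd
    rw [star_star] at hconj
    exact hconj.trans ((hdle τ hτ).trans hn.le)

end SmallInStabilization

/-! ### Cutting out a small element -/

section CutOut

variable {a b c e p : W}

omit [StarOrderedRing W] in
theorem dTau_zero (τ : QuasiTrace W) : dTau τ 0 = 0 := by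
  simp only [dTau, fEps, cfcₙ_apply_zero, τ.map_zero, iSup_const]

omit [PartialOrder A] [StarOrderedRing A] in
theorem dTau_le_dTau_conj_one_sub_add (SB : Stabilization A W) (τ : QuasiTrace W)
    (hb : 0 ≤ b) (hc : 0 ≤ c) (he : IsSelfAdjoint e) (hec : e ∈ her c) :
    dTau τ b ≤ dTau τ (b - e * b - b * e + e * b * e) + dTau τ c := by
  obtain ⟨s, hs, rfl⟩ := exists_isSelfAdjoint_mul_self hb
  have hfar : star (s - s * e) * (s - s * e)
      = s * s - e * (s * s) - s * s * e + e * (s * s) * e := by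
    rw [star_sub, star_mul, hs.star_eq, he.star_eq]
    noncomm_ring
  have hnear : star (s * e) * (s * e) = e * (s * s) * e := by
    rw [star_mul, hs.star_eq, he.star_eq]
    simp only [mul_assoc]
  have hsplit := dTau_star_add_mul_add_le SB τ (s - s * e) (s * e)
  rw [sub_add_cancel, hs.star_eq, hfar, hnear] at hsplit
  refine hsplit.trans (add_le_add_right ?_ _)
  exact dTau_le_of_mem_her τ hc (he.conjugate_nonneg hb) (mul_mul_mem_her_of_mem _ hec hec)

omit [PartialOrder W] [StarOrderedRing W] in
theorem conj_one_sub_mem_her (hb : b ∈ her b) (he : e ∈ her b) :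
    b - e * b - b * e + e * b * e ∈ her b :=
  add_mem_her (sub_mem_her (sub_mem_her hb (mul_mem_her he hb)) (mul_mem_her hb he))
    (mul_mul_mem_her_of_mem b he he)

omit [PartialOrder W] [StarOrderedRing W] in
theorem mul_conj_one_sub_eq_zero (h : p * e = p) (b : W) :
    p * (b - e * b - b * e + e * b * e) = 0 := by
  simp only [mul_add, mul_sub, ← mul_assoc, h]
  abel

omit [PartialOrder A] [StarOrderedRing A] in
/-- Cutting `b` down by `1 - f_{ε/2}(c)` costs at most `d_τ(c)` and makes room for `f_ε(c)`. -/
theorem exists_orthogonal_of_mem_her (SB : Stabilization A W) (hb : 0 ≤ b) (hcb : c ∈ her b)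
    (hc : 0 ≤ c) (hc0 : c ≠ 0) :
    ∃ b₀ ∈ her b, ∃ y ∈ her b, 0 ≤ b₀ ∧ b₀ ≠ 0 ∧ ‖b₀‖ ≤ 1 ∧ 0 ≤ y ∧ b₀ * y = 0 ∧
      ∀ τ : QuasiTrace W, dTau τ b ≤ dTau τ y + dTau τ c := by
  obtain ⟨ε, hε, hε0⟩ := exists_fEps_ne_zero hc hc0
  have he := isSelfAdjoint_fEps (ε / 2) c
  have hec := fEps_mem_her hc (ε / 2)
  exact ⟨fEps ε c, her_subset_her hcb (fEps_mem_her hc _), _,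
    conj_one_sub_mem_her (self_mem_her hb) (her_subset_her hcb hec), fEps_nonneg _ _, hε0,
    norm_fEps_le _ _, conj_one_sub_nonneg hb he,
    mul_conj_one_sub_eq_zero (fEps_mul_fEps_of_half_le (half_pos hε) le_rfl c) b,
    fun τ => dTau_le_dTau_conj_one_sub_add SB τ hb hc he hec⟩

theorem exists_pos_smul_norm_le_one {E : Type*} [SeminormedAddCommGroup E] [NormedSpace ℝ E]
    (y : E) : ∃ t : ℝ, 0 < t ∧ ‖t • y‖ ≤ 1 := by
  have hm : 0 < max 1 ‖y‖ := one_pos.trans_le (le_max_left _ _)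
  refine ⟨(max 1 ‖y‖)⁻¹, inv_pos.2 hm, ?_⟩
  rw [norm_smul, Real.norm_of_nonneg (inv_nonneg.2 hm.le), inv_mul_le_iff₀ hm, mul_one]
  exact le_max_right _ _

theorem exists_two_orthogonal_of_dTau_add_lt (SB : Stabilization A W) (hσ : SigmaUnital A)
    (hs : IsSimpleCStar A) (hne : ¬ IsElementary A) (hqt : (QTSet SB).Nonempty) (hb : 0 ≤ b)
    {r : ℝ≥0∞} (hr : r ≠ 0) (hlt : ∀ τ ∈ closure (QTSet SB), dTau τ a + r < dTau τ b) :
    ∃ b₀ b₁ : W, b₀ ∈ her b ∧ b₁ ∈ her b ∧ 0 ≤ b₀ ∧ 0 ≤ b₁ ∧ b₀ ≠ 0 ∧ b₁ ≠ 0 ∧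
      ‖b₀‖ ≤ 1 ∧ ‖b₁‖ ≤ 1 ∧ b₀ * b₁ = 0 ∧ b₁ * b₀ = 0 ∧
      ∀ τ ∈ closure (QTSet SB), dTau τ a < dTau τ b₁ := by
  obtain ⟨τ₀, hτ₀⟩ := hqt.closure
  have ne_zero {x y : W} (h : dTau τ₀ x < dTau τ₀ y) : y ≠ 0 := by
    rintro rfl
    exact not_lt_bot (h.trans_eq (dTau_zero τ₀))
  have hb0 : b ≠ 0 := ne_zero (le_self_add.trans_lt (hlt τ₀ hτ₀))
  obtain ⟨c, hcb, hc, hc0, hcr⟩ := exists_mem_her_dTau_le SB hs hσ hne hb hb0 hr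
  obtain ⟨b₀, hb₀, y, hy, hb₀0, hb₀ne, hb₀1, hy0, horth, hcut⟩ :=
    exists_orthogonal_of_mem_her SB hb hcb hc hc0
  obtain ⟨t, ht, hty⟩ := exists_pos_smul_norm_le_one y
  have hlt' : ∀ τ ∈ closure (QTSet SB), dTau τ a < dTau τ (t • y) := fun τ hτ => by
    rw [dTau_smul τ ht hy0]
    refine lt_of_add_lt_add_right ((hlt τ hτ).trans_le ((hcut τ).trans ?_))
    exact add_le_add_right (hcr τ hτ) _
  have horth' : y * b₀ = 0 :=
    ((IsSelfAdjoint.of_nonneg hb₀0).commute_of_mul_eq_zero (.of_nonneg hy0) horth).eq ▸ horth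
  exact ⟨b₀, t • y, hb₀, smul_mem_her t hy, hb₀0, smul_nonneg ht.le hy0, hb₀ne,
    ne_zero (hlt' τ₀ hτ₀), hb₀1, hty, by rw [mul_smul_comm, horth, smul_zero],
    by rw [smul_mul_assoc, horth', smul_zero], hlt'⟩

end CutOut

/-! ### From a pointwise gap to a uniform gap -/

section UniformGap

variable {R : Type*} [NonUnitalCStarAlgebra R] [PartialOrder R] [StarOrderedRing R]
  {S : Set (QuasiTrace R)} {a b : R}

omit [StarOrderedRing R] in
theorem exists_dTau_le_fEps_add (hω : omegaOn S a = 0) {r : ℝ≥0∞} (hr : r ≠ 0) :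
    ∃ δ > 0, ∀ τ ∈ S, dTau τ a ≤ τ.toFun (fEps δ a) + r := by
  obtain ⟨n, hn⟩ := iInf_lt_iff.1 (hω.trans_lt (pos_iff_ne_zero.2 hr))
  exact ⟨_, one_div_add_one_pos n, fun τ hτ =>
    tsub_le_iff_left.1 ((le_iSup₂ (f := fun (τ : QuasiTrace R) (_ : τ ∈ S) =>
      dTau τ a - τ.toFun (fEps (1 / (n + 1)) a)) τ hτ).trans hn.le)⟩

theorem exists_nhdsWithin_dTau_add_lt (ha : 0 ≤ a) (hb : 0 ≤ b) (hω : omegaOn S a = 0)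
    {τ₀ : QuasiTrace R} (h : dTau τ₀ a < dTau τ₀ b) :
    ∃ N ∈ 𝓝[S] τ₀, ∃ r : ℝ≥0∞, r ≠ 0 ∧ ∀ τ ∈ N, dTau τ a + r < dTau τ b := by
  obtain ⟨m, hm⟩ := lt_iSup_iff.1 h
  obtain ⟨u, hu, hum⟩ := exists_between hm
  obtain ⟨v, huv, hvm⟩ := exists_between hum
  have hr : (v - u) / 2 ≠ 0 := (ENNReal.half_pos (tsub_pos_of_lt huv).ne').ne'
  obtain ⟨δ, hδ, hosc⟩ := exists_dTau_le_fEps_add hω hr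
  have hopena : IsOpen {τ : QuasiTrace R | τ.toFun (fEps δ a) < u} :=
    isOpen_lt (continuous_eval_of_mem_pedersen (fEps_mem_pedersen a hδ)) continuous_const
  have hopenb : IsOpen {τ : QuasiTrace R | v < τ.toFun (fEps (1 / (m + 1)) b)} :=
    isOpen_lt continuous_const
      (continuous_eval_of_mem_pedersen (fEps_mem_pedersen b (one_div_add_one_pos m)))
  refine ⟨_, inter_mem_nhdsWithin S ((hopena.inter hopenb).mem_nhds
    ⟨(fEps_le_dTau τ₀ ha δ).trans_lt hu, hvm⟩), (v - u) / 2, hr, ?_⟩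
  rintro τ ⟨hτ, hau, hvb⟩
  calc dTau τ a + (v - u) / 2
      ≤ τ.toFun (fEps δ a) + (v - u) / 2 + (v - u) / 2 := by gcongr; exact hosc τ hτ
    _ = τ.toFun (fEps δ a) + (v - u) := by rw [add_assoc, ENNReal.add_halves]
    _ ≤ u + (v - u) := add_le_add_left (le_of_lt hau) _
    _ = v := add_tsub_cancel_of_le huv.le
    _ < τ.toFun (fEps (1 / (m + 1)) b) := hvb
    _ ≤ dTau τ b := fEps_le_dTau τ hb _

theorem exists_dTau_add_lt_of_isCompact (hS : IsCompact S) (ha : 0 ≤ a) (hb : 0 ≤ b)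
    (h : ∀ τ ∈ S, dTau τ a + omegaOn S a < dTau τ b) :
    ∃ r : ℝ≥0∞, r ≠ 0 ∧ ∀ τ ∈ S, dTau τ a + r < dTau τ b := by
  obtain hω | hω := ne_or_eq (omegaOn S a) 0
  · exact ⟨_, hω, h⟩
  refine hS.induction_on (p := fun T => ∃ r : ℝ≥0∞, r ≠ 0 ∧ ∀ τ ∈ T, dTau τ a + r < dTau τ b)
    ⟨1, one_ne_zero, fun _ => False.elim⟩
    (fun T T' hTT' ⟨r, hr, hlt⟩ => ⟨r, hr, fun τ hτ => hlt τ (hTT' hτ)⟩) ?_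
    (fun τ₀ hτ₀ => exists_nhdsWithin_dTau_add_lt ha hb hω (le_self_add.trans_lt (h τ₀ hτ₀)))
  rintro T T' ⟨r, hr, hlt⟩ ⟨r', hr', hlt'⟩
  refine ⟨min r r', (lt_min (pos_iff_ne_zero.2 hr) (pos_iff_ne_zero.2 hr')).ne', ?_⟩
  rintro τ (hτ | hτ)
  · exact (add_le_add_right (min_le_left r r') _).trans_lt (hlt τ hτ)
  · exact (add_le_add_right (min_le_right r r') _).trans_lt (hlt' τ hτ)

end UniformGap

theorem exists_two_orthogonal_dominating_general (SB : Stabilization A W)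
    (hσ : SigmaUnital A) (hsimple : IsSimpleCStar A) (hne : ¬ IsElementary A)
    (hqt : (QTSet SB).Nonempty) (a b : W) (ha : 0 ≤ a) (hb : 0 ≤ b)
    (hcase :
      (∀ τ ∈ closure (QTSet SB), dTau τ a + omegaOn (closure (QTSet SB)) a < dTau τ b) ∨
      (∃ r : ℝ, 0 < r ∧ ∀ τ ∈ closure (QTSet SB), dTau τ a + ENNReal.ofReal r < dTau τ b)) :
    ∃ b₀ b₁ : W, b₀ ∈ her b ∧ b₁ ∈ her b ∧ 0 ≤ b₀ ∧ 0 ≤ b₁ ∧ b₀ ≠ 0 ∧ b₁ ≠ 0 ∧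
      ‖b₀‖ ≤ 1 ∧ ‖b₁‖ ≤ 1 ∧ b₀ * b₁ = 0 ∧ b₁ * b₀ = 0 ∧
      ∀ τ ∈ closure (QTSet SB), dTau τ a < dTau τ b₁ := by
  obtain ⟨r, hr, hlt⟩ : ∃ r : ℝ≥0∞, r ≠ 0 ∧
      ∀ τ ∈ closure (QTSet SB), dTau τ a + r < dTau τ b := by
    obtain hω | ⟨r, hr, hlt⟩ := hcase
    · exact exists_dTau_add_lt_of_isCompact (isCompact_closure_QTSet SB) ha hb hω
    · exact ⟨ENNReal.ofReal r, (ENNReal.ofReal_pos.2 hr).ne', hlt⟩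
  exact exists_two_orthogonal_of_dTau_add_lt SB hσ hsimple hne hqt hb hr hlt

/-- **Lemma.** Let `A` be a σ-unital non-elementary algebraically simple C*-algebra with
`QT(A) ≠ ∅` and `a, b ∈ (A ⊗ K)₊`.  If either (1) `d_τ(a) + ω(a) < d_τ(b)` for all
`τ ∈ \overline{QT(A)}^w`, or (2) there is `r > 0` with `d_τ(a) + r < d_τ(b)` for all such `τ`,
then there are two mutually orthogonal nonzero positive contractions `b₀, b₁ ∈ Her(b)` with
`d_τ(a) < d_τ(b₁)` for all `τ ∈ \overline{QT(A)}^w`. -/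
theorem exists_two_orthogonal_dominating
    (SB : Stabilization A W)
    (hσ : SigmaUnital A) (hsimple : IsSimpleCStar A) (hne : ¬ IsElementary A)
    (halg : pedersen A = Set.univ) (hqt : (QTSet SB).Nonempty)
    (a b : W) (ha : 0 ≤ a) (hb : 0 ≤ b)
    (hcase :
      (∀ τ ∈ closure (QTSet SB),
          dTau τ a + omegaOn (closure (QTSet SB)) a < dTau τ b) ∨
      (∃ r : ℝ, 0 < r ∧ ∀ τ ∈ closure (QTSet SB),
          dTau τ a + ENNReal.ofReal r < dTau τ b)) :
    ∃ b₀ b₁ : W, b₀ ∈ her b ∧ b₁ ∈ her b ∧ 0 ≤ b₀ ∧ 0 ≤ b₁ ∧ b₀ ≠ 0 ∧ b₁ ≠ 0 ∧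
      ‖b₀‖ ≤ 1 ∧ ‖b₁‖ ≤ 1 ∧ b₀ * b₁ = 0 ∧ b₁ * b₀ = 0 ∧
      ∀ τ ∈ closure (QTSet SB), dTau τ a < dTau τ b₁ := by
  exact exists_two_orthogonal_dominating_general SB hσ hsimple hne hqt a b ha hb hcase

end Paper
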